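/- arXiv:1304.7685 — 14 statements merged into one kernel-verified Lean document; each statement's English description precedes it below -/
import Mathlib

section
/- Let p, q ∈ ℂ and let x : ℤ → ℂ satisfy x(m+2) = p·x(m+1) − q·x(m) for all m ∈ ℤ. Then the sequence X(m) = x(m)² satisfies X(m+3) = (p² − q)·X(m+2) + (q² − p²q)·X(m+1) + q³·X(m) for all m ∈ ℤ. -/
/-- If `x : ℤ → ℂ` satisfies `x(m+2) = p·x(m+1) − q·x(m)`, then
`X(m) = x(m)²` satisfies `X(m+3) = (p²−q)·X(m+2) + (q²−p²q)·X(m+1) + q³·X(m)`. -/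
theorem square_of_second_order_recurrence (p q : ℂ) (x : ℤ → ℂ)
    (hx : ∀ m : ℤ, x (m + 2) = p * x (m + 1) - q * x m) :
    ∀ m : ℤ, (x (m + 3)) ^ 2 =
      (p ^ 2 - q) * (x (m + 2)) ^ 2 + (q ^ 2 - p ^ 2 * q) * (x (m + 1)) ^ 2
        + q ^ 3 * (x m) ^ 2 := by
  intro m
  have h₀ := hx m
  have h₁ : x (m + 3) = p * x (m + 2) - q * x (m + 1) := by
    have h := hx (m + 1)
    rwa [show m + 1 + 2 = m + 3 by ring, show m + 1 + 1 = m + 2 by ring] at h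
  rw [h₁, h₀]
  ring
end

section
/- Let s ≥ 1, n ≥ 1 and A_1, …, A_s ∈ ℂ, and set t = C(n+s−1, n) (the binomial coefficient). Then there exist constants c_1, …, c_t ∈ ℂ such that for every choice of sequences x_1, …, x_n : ℤ → ℂ, each satisfying x(m) = A_1·x(m−1) + ⋯ + A_s·x(m−s) for all m ∈ ℤ, the product X(m) = x_1(m)·x_2(m)⋯x_n(m) satisfies the linear recurrence X(m) = c_1·X(m−1) + c_2·X(m−2) + ⋯ + c_t·X(m−t) for all m ∈ ℤ. In particular, any two products of n solutions of the recurrence satisfy one common linear recurrence relation. -/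
/-!
Every solution satisfies `x (m + k) = ∑ j < s, a k j * x (m + j)` with coefficients `a k j` that do
not depend on the solution. Expanding `∏ i, x i (m + k)` and grouping the terms indexed by
`f : Fin n → Fin s` according to the multiset of values of `f` gives
`∏ i, x i (m + k) = ∑ μ, (∏ j ∈ μ, a k j) * P μ`, where `μ` runs over the multisets of size `n` on
`Fin s` and `P μ` is independent of `k`. There are `t = C(n+s-1, n)` such multisets, so the `t + 1`
coefficient vectors for `k = 0, …, t` are linearly dependent, and a dependence among them is a
relation between `X m, …, X (m + t)` valid for all products `X` at once. Solving it for its highest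
term `X (m + r)`, `r ≤ t`, and shifting `m` gives the recurrence.
-/

open Finset

/-- The values of all solutions at `m + k` are given by one linear form in the values at
`m, …, m + s - 1`. -/
lemma exists_solution_coeffs (s : ℕ) (A : ℕ → ℂ) (k : ℕ) :
    ∃ a : Fin s → ℂ, ∀ x : ℤ → ℂ, (∀ m : ℤ, x m = ∑ j ∈ Icc 1 s, A j * x (m - j)) →
      ∀ m : ℤ, x (m + k) = ∑ j, a j * x (m + (j : ℕ)) := by
  induction k using Nat.strong_induction_on with
  | _ k ih =>
    by_cases hk : k < s
    · refine ⟨Pi.single ⟨k, hk⟩ 1, fun x _ m => ?_⟩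
      simp [Pi.single_apply]
    · have h : ∀ l : ℕ, ∃ a : Fin s → ℂ, l ∈ Icc 1 s → ∀ x : ℤ → ℂ,
          (∀ m : ℤ, x m = ∑ j ∈ Icc 1 s, A j * x (m - j)) →
          ∀ m : ℤ, x (m + k - l) = ∑ j, a j * x (m + (j : ℕ)) := by
        intro l
        by_cases hl : l ∈ Icc 1 s
        · obtain ⟨a, ha⟩ := ih (k - l) (by rw [mem_Icc] at hl; omega)
          refine ⟨a, fun _ x hx m => ?_⟩
          rw [← ha x hx m]
          congr 1
          rw [mem_Icc] at hl
          omega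
        · exact ⟨0, fun h => absurd h hl⟩
      choose a ha using h
      refine ⟨fun i => ∑ l ∈ Icc 1 s, A l * a l i, fun x hx m => ?_⟩
      rw [hx (m + k), sum_congr rfl fun l hl => by rw [ha l hl x hx m]]
      simp only [mul_sum, sum_mul]
      rw [sum_comm]
      simp only [mul_assoc]

/-- A product of `n` linear forms with the same coefficients `a` is a combination of quantities
independent of `a`, whose coefficients are the degree-`n` monomials in `a`. -/
lemma prod_sum_eq_sum_sym {s n : ℕ} (a : Fin s → ℂ) (v : Fin n → Fin s → ℂ) :
    ∏ i, ∑ j, a j * v i j =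
      ∑ μ : Sym (Fin s) n, ((μ : Multiset (Fin s)).map a).prod *
        ∑ f : Fin n → Fin s with univ.val.map f = (μ : Multiset (Fin s)), ∏ i, v i (f i) := by
  rw [Fintype.prod_sum,
    ← sum_fiberwise univ (fun f : Fin n → Fin s =>
      (Sym.mk (univ.val.map f) (by simp) : Sym (Fin s) n))]
  refine sum_congr rfl fun μ _ => ?_
  rw [mul_sum]
  refine sum_congr ?_ fun f hf => ?_
  · ext f
    simp [← Sym.coe_inj]
  · rw [mem_filter] at hf
    rw [← hf.2, prod_mul_distrib, Multiset.map_map]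
    rfl

/-- One nontrivial linear relation holds between `t + 1` consecutive terms of every product of
`n` solutions, where `t = C(n+s-1, n)`. -/
lemma exists_common_relation (s n : ℕ) (A : ℕ → ℂ) :
    ∃ g : Fin (Nat.choose (n + s - 1) n + 1) → ℂ, (∃ k, g k ≠ 0) ∧ ∀ x : Fin n → ℤ → ℂ,
      (∀ i : Fin n, ∀ m : ℤ, x i m = ∑ j ∈ Icc 1 s, A j * x i (m - j)) →
      ∀ m : ℤ, ∑ k, g k * ∏ i, x i (m + (k : ℕ)) = 0 := by
  choose a ha using exists_solution_coeffs s A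
  let b : Fin (Nat.choose (n + s - 1) n + 1) → Sym (Fin s) n → ℂ :=
    fun k μ => ((μ : Multiset (Fin s)).map (a k)).prod
  have hb : ¬ LinearIndependent ℂ b := by
    intro h
    have := h.fintype_card_le_finrank
    rw [Module.finrank_fintype_fun_eq_card, Sym.card_sym_eq_choose, Fintype.card_fin,
      Fintype.card_fin, add_comm s n] at this
    omega
  obtain ⟨g, hg, hne⟩ := Fintype.not_linearIndependent_iff.1 hb
  refine ⟨g, hne, fun x hx m => ?_⟩
  have hX : ∀ k : Fin (Nat.choose (n + s - 1) n + 1), ∏ i, x i (m + (k : ℕ)) =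
      ∑ μ : Sym (Fin s) n, b k μ *
        ∑ f : Fin n → Fin s with univ.val.map f = (μ : Multiset (Fin s)),
          ∏ i, x i (m + (f i : ℕ)) := by
    intro k
    rw [← prod_sum_eq_sum_sym (a k) fun i j => x i (m + (j : ℕ))]
    exact prod_congr rfl fun i _ => ha k (x i) (hx i) m
  simp only [hX, mul_sum (s := (univ : Finset (Sym (Fin s) n))), ← mul_assoc]
  rw [sum_comm]
  refine sum_eq_zero fun μ _ => ?_
  have h := congrFun hg μ
  simp only [Finset.sum_apply, Pi.smul_apply, smul_eq_mul, Pi.zero_apply] at h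
  rw [← sum_mul, h, zero_mul]

/-- With `t = C(n+s−1, n)`, there exist constants `c_1, …, c_t` such that
the product of any `n` solutions of the order-`s` recurrence
`x(m) = Σ_{j=1}^{s} A_j x(m−j)` satisfies `X(m) = Σ_{j=1}^{t} c_j X(m−j)`. -/
theorem product_of_solutions_satisfies_common_recurrence
    (s n : ℕ) (hs : 1 ≤ s) (hn : 1 ≤ n) (A : ℕ → ℂ) :
    ∃ c : ℕ → ℂ, ∀ x : Fin n → ℤ → ℂ,
      (∀ i : Fin n, ∀ m : ℤ, x i m = ∑ j ∈ Icc 1 s, A j * x i (m - j)) →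
      ∀ m : ℤ, (∏ i, x i m) =
        ∑ j ∈ Icc 1 (Nat.choose (n + s - 1) n), c j * ∏ i, x i (m - j) := by
  obtain ⟨g, ⟨k₀, hk₀⟩, hg⟩ := exists_common_relation s n A
  generalize Nat.choose (n + s - 1) n = t at *
  obtain ⟨r, hr, hmax⟩ := exists_max_image (univ.filter fun k => g k ≠ 0) id ⟨k₀, by simpa⟩
  have hr : g r ≠ 0 := by simpa using hr
  have hmax : ∀ k, r < k → g k = 0 := by
    intro k hk
    by_contra h
    exact absurd (hmax k (by simpa using h)) (not_le.2 hk)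
  -- Extending `g` by zero to `ℕ` allows reindexing by `k ↦ r - k` without bounds on the indices.
  let G : ℕ → ℂ := fun k => if h : k < t + 1 then g ⟨k, h⟩ else 0
  have hG : ∀ k : Fin (t + 1), G k = g k := fun k => dif_pos k.isLt
  refine ⟨fun j => if j ≤ r then -(G (r - j) / g r) else 0, fun x hx m => ?_⟩
  have h1 : ∑ k ∈ range (r + 1), G k * ∏ i, x i (m - (r : ℕ) + k) = 0 := by
    rw [← hg x hx (m - (r : ℕ)), sum_subset (s₂ := range (t + 1)) (range_mono (by omega)),
      sum_range]
    · exact sum_congr rfl fun k _ => by rw [hG]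
    · intro k hk hk'
      rw [mem_range] at hk hk'
      have : G k = 0 := by
        simp only [G, dif_pos hk]
        exact hmax _ (Fin.lt_def.2 (by simpa using hk'))
      rw [this, zero_mul]
  have h2 : ∑ j ∈ Icc 1 t, (if j ≤ r then -(G (r - j) / g r) else 0) * ∏ i, x i (m - j) =
      ∑ k ∈ range r, -(G k / g r) * ∏ i, x i (m - (r : ℕ) + k) := by
    rw [← sum_subset (s₁ := Icc 1 (r : ℕ)) (Icc_subset_Icc_right (by omega))]
    · refine sum_bij' (fun j _ => r - j) (fun k _ => r - k) ?_ ?_ ?_ ?_ ?_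
      · intro j hj
        rw [mem_Icc] at hj
        rw [mem_range]
        omega
      · intro k hk
        rw [mem_range] at hk
        rw [mem_Icc]
        omega
      · intro j hj
        rw [mem_Icc] at hj
        omega
      · intro k hk
        rw [mem_range] at hk
        omega
      · intro j hj
        rw [mem_Icc] at hj
        rw [if_pos hj.2, show m - (r : ℕ) + ((r - j : ℕ) : ℤ) = m - j by omega]
    · intro j hj hj'
      rw [mem_Icc] at hj hj'
      rw [if_neg (by omega), zero_mul]
  rw [sum_range_succ, hG, sub_add_cancel] at h1
  rw [h2, ← mul_right_inj' hr, mul_sum, eq_neg_of_add_eq_zero_right h1, ← sum_neg_distrib]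
  refine sum_congr rfl fun k _ => ?_
  field_simp
end

section
/- Let p, q ∈ ℂ with q ≠ 0, let W : ℤ → ℂ be any (p,q)-recursive sequence, and let u be the (p,q)-recursive sequence with u_0 = 0, u_1 = 1. Then for all m, r ∈ ℤ, W_{m+r+1} = u_{m+1}·W_{r+1} − q·u_m·W_r. -/
/-!
Induction on `m` in both directions, for all `r` at once. The right-hand side depends only on
`m + r`: applying the recurrences for `W` at `r + 2` and for `u` at `m + 1` gives
`u (m+1) * W (r+1) - q * u m * W r = p * u m * W (r+1) - q * u (m-1) * W (r+1) - q * u m * W r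
= u m * W (r+2) - q * u (m-1) * W (r+1)`.
So the formula at `(m, r + 1)` is equivalent to the one at `(m + 1, r)`, and for `m = 0` it is
trivial.
-/

/-- For any `(p,q)`-recursive `W` and the fundamental solution `u`,
`W(m+r+1) = u(m+1)·W(r+1) − q·u(m)·W(r)`. -/
theorem addition_formula_pq (p q : ℂ) (hq : q ≠ 0) (W u : ℤ → ℂ)
    (hW : ∀ m : ℤ, W m = p * W (m - 1) - q * W (m - 2))
    (hu : ∀ m : ℤ, u m = p * u (m - 1) - q * u (m - 2))
    (hu0 : u 0 = 0) (hu1 : u 1 = 1) :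
    ∀ m r : ℤ, W (m + r + 1) = u (m + 1) * W (r + 1) - q * u m * W r := by
  intro m
  induction m using Int.induction_on with
  | zero => intro r; simp [hu0, hu1]
  | succ m ih =>
    intro r
    have h := ih (r + 1)
    have hw := hW (r + 1 + 1)
    have hv := hu ((m : ℤ) + 1 + 1)
    rw [show r + 1 + 1 - 1 = r + 1 by ring, show r + 1 + 1 - 2 = r by ring] at hw
    rw [show (m : ℤ) + 1 + 1 - 1 = m + 1 by ring, show (m : ℤ) + 1 + 1 - 2 = m by ring] at hv
    rw [show (m : ℤ) + 1 + r + 1 = m + (r + 1) + 1 by ring, h, hw, hv]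
    ring
  | pred m ih =>
    intro r
    have h := ih (r - 1)
    have hw := hW (r + 1)
    have hv := hu (-(m : ℤ) + 1)
    rw [show r + 1 - 1 = r by ring, show r + 1 - 2 = r - 1 by ring] at hw
    rw [show -(m : ℤ) + 1 - 1 = -m by ring, show -(m : ℤ) + 1 - 2 = -m - 1 by ring] at hv
    rw [show -(m : ℤ) - 1 + r + 1 = -m + (r - 1) + 1 by ring, h, hw, hv,
      show -(m : ℤ) - 1 + 1 = -m by ring, show r - 1 + 1 = r by ring]
    ring
end

section
/- Let n ≥ 1, let p, q ∈ ℂ with q ≠ 0, and let u be the (p,q)-recursive sequence with u_0 = 0, u_1 = 1. Suppose u_1·u_2⋯u_{n+1} ≠ 0. Let x_1, …, x_n : ℤ → ℂ each be (p,q)-recursive and set X(m) = x_1(m)·x_2(m)⋯x_n(m). Then for all m ∈ ℤ, Σ_{i=0}^{n+1} (−1)^i · q^{i(i−1)/2} · (n+1 | i)_u · X(m−i) = 0. -/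
/-!
Write `N = M + 1` for the order of the recurrence satisfied by a product of `M` sequences, and let
`X = Y · x` with `Y` a product of `M` factors and `x` one more factor. The identity
`u_{d+e} x_{s+d} = u_d x_{s+d+e} + q^d u_e x_s` (`recursive_three_term`), divided by `u_e`, gives a
Pascal-type rule for the signed coefficients `c_N(i) = (-1)^i q^{i(i-1)/2} (N | i)_u`
(`lucasCoeff_succ_mul`): with `N` the order for `Y`,
`c_{N+1}(i+1) x(m-i-1) = c_N(i+1) x(m) - q^N c_N(i) x(m-N-1)`.
The two factors of `x` on the right do not depend on `i`. Multiplying by `Y(m-i-1)` and summing over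
`i` therefore expresses the sum for `X` at `m` as a combination of the sums for `Y` at `m` and
`m - 1`, and both vanish by induction on the number of factors.
-/

open Finset

/-- The signed coefficient `(-1)^i q^{i(i-1)/2} (N | i)_u` of the recurrence of order `N`. For
`i = N + 1` the numerator contains `u 0`. -/
noncomputable def lucasCoeff (q : ℂ) (u : ℤ → ℂ) (N i : ℕ) : ℂ :=
  (-1 : ℂ) ^ i * q ^ (i * (i - 1) / 2) *
    ((∏ j ∈ range i, u ((N : ℤ) - j)) / (∏ j ∈ range i, u (j + 1)))

/-- The case `e = 1` of `recursive_three_term`; it is the Casoratian of `u` and `x`. -/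
lemma recursive_casoratian {p q : ℂ} {u x : ℤ → ℂ}
    (hu : ∀ m : ℤ, u m = p * u (m - 1) - q * u (m - 2)) (hu0 : u 0 = 0) (hu1 : u 1 = 1)
    (hx : ∀ m : ℤ, x m = p * x (m - 1) - q * x (m - 2)) (d : ℕ) (s : ℤ) :
    u (d + 1) * x (s + d) = u d * x (s + d + 1) + q ^ d * x s := by
  induction d with
  | zero => simp [hu0, hu1]
  | succ d ih =>
    have h1 := hu ((d : ℤ) + 1 + 1)
    have h2 := hx (s + d + 1 + 1)
    rw [show (d : ℤ) + 1 + 1 - 1 = d + 1 by ring, show (d : ℤ) + 1 + 1 - 2 = d by ring] at h1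
    rw [show s + d + 1 + 1 - 1 = s + d + 1 by ring, show s + d + 1 + 1 - 2 = s + d by ring] at h2
    push_cast
    rw [← add_assoc, h1, h2, pow_succ]
    linear_combination q * ih

lemma recursive_three_term {p q : ℂ} {u x : ℤ → ℂ}
    (hu : ∀ m : ℤ, u m = p * u (m - 1) - q * u (m - 2)) (hu0 : u 0 = 0) (hu1 : u 1 = 1)
    (hx : ∀ m : ℤ, x m = p * x (m - 1) - q * x (m - 2)) (d : ℕ) (s : ℤ) (e : ℕ) :
    u (d + e) * x (s + d) = u d * x (s + d + e) + q ^ d * u e * x s := by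
  -- Each side, as a function of `e`, satisfies the same second-order recurrence.
  induction e using Nat.twoStepInduction with
  | zero => simp [hu0]
  | one => simpa [hu1] using recursive_casoratian hu hu0 hu1 hx d s
  | more e ih0 ih1 =>
    have h1 := hu ((d : ℤ) + (e + 2))
    have h2 := hx (s + d + (e + 2))
    have h3 := hu ((e : ℤ) + 2)
    rw [show (d : ℤ) + (e + 2) - 1 = d + (e + 1) by ring,
      show (d : ℤ) + (e + 2) - 2 = d + e by ring] at h1
    rw [show s + d + ((e : ℤ) + 2) - 1 = s + d + (e + 1) by ring,
      show s + d + ((e : ℤ) + 2) - 2 = s + d + e by ring] at h2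
    rw [show (e : ℤ) + 2 - 1 = e + 1 by ring, show (e : ℤ) + 2 - 2 = e by ring] at h3
    push_cast at ih1 ⊢
    rw [h1, h2, h3]
    linear_combination p * ih1 - q * ih0

lemma lucasCoeff_succ_self {q : ℂ} {u : ℤ → ℂ} (hu0 : u 0 = 0) (N : ℕ) :
    lucasCoeff q u N (N + 1) = 0 := by
  simp [lucasCoeff, prod_range_succ, hu0]

/-- A Pascal-type rule for the signed coefficients, weighted by a recursive sequence: it trades the
values `x (m - i - 1)` for the values `x m` and `x (m - N - 1)`, independent of `i`. -/
lemma lucasCoeff_succ_mul {p q : ℂ} {u x : ℤ → ℂ}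
    (hu : ∀ m : ℤ, u m = p * u (m - 1) - q * u (m - 2)) (hu0 : u 0 = 0) (hu1 : u 1 = 1)
    (hx : ∀ m : ℤ, x m = p * x (m - 1) - q * x (m - 2)) {N i : ℕ} (hi : i ≤ N)
    (hne : u (i + 1) ≠ 0) (m : ℤ) :
    lucasCoeff q u (N + 1) (i + 1) * x (m - (i + 1)) =
      lucasCoeff q u N (i + 1) * x m - q ^ N * lucasCoeff q u N i * x (m - N - 1) := by
  obtain ⟨d, rfl⟩ := Nat.exists_eq_add_of_le hi
  have key := recursive_three_term hu hu0 hu1 hx d (m - (i + d : ℕ) - 1) (i + 1)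
  have hP : ∏ j ∈ range (i + 1), u (((i + d + 1 : ℕ) : ℤ) - j) =
      (∏ j ∈ range i, u (((i + d : ℕ) : ℤ) - j)) * u (d + (i + 1 : ℕ)) := by
    rw [prod_range_succ']
    congr 1
    · refine prod_congr rfl fun j _ => ?_
      congr 1
      push_cast
      ring
    · congr 1
      push_cast
      ring
  have hP' : ∏ j ∈ range (i + 1), u (((i + d : ℕ) : ℤ) - j) =
      (∏ j ∈ range i, u (((i + d : ℕ) : ℤ) - j)) * u d := by
    rw [prod_range_succ]
    congr 2
    push_cast
    ring
  unfold lucasCoeff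
  rw [hP, hP', prod_range_succ (fun j : ℕ => u ((j : ℤ) + 1)), mul_div_mul_comm, mul_div_mul_comm,
    Nat.triangle_succ]
  rw [show m - ((i + d : ℕ) : ℤ) - 1 + d = m - (i + 1) by push_cast; ring,
    show m - ((i : ℤ) + 1) + (i + 1 : ℕ) = m by push_cast; ring] at key
  generalize (∏ j ∈ range i, u (((i + d : ℕ) : ℤ) - j)) / (∏ j ∈ range i, u ((j : ℤ) + 1)) = a
  push_cast at key ⊢
  rw [pow_add, pow_add, pow_succ]
  field_simp
  linear_combination -(q ^ (i * (i - 1) / 2) * q ^ i * a) * key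

lemma sum_lucasCoeff_mul_prod {p q : ℂ} {u : ℤ → ℂ}
    (hu : ∀ m : ℤ, u m = p * u (m - 1) - q * u (m - 2)) (hu0 : u 0 = 0) (hu1 : u 1 = 1)
    (n : ℕ) (hnz : ∀ k : ℕ, k ≤ n → u (k + 1) ≠ 0) (x : Fin n → ℤ → ℂ)
    (hx : ∀ i : Fin n, ∀ m : ℤ, x i m = p * x i (m - 1) - q * x i (m - 2)) (m : ℤ) :
    ∑ i ∈ range (n + 2), lucasCoeff q u (n + 1) i * ∏ t, x t (m - i) = 0 := by
  induction n generalizing m with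
  | zero => simp [sum_range_succ, lucasCoeff, hu1]
  | succ n ih =>
    have ih' := ih (fun k hk => hnz k (by omega)) (fun t => x t.succ) (fun t => hx t.succ)
    -- The sum for the tail at `m`, padded by a vanishing term and with its first term split off.
    have h1 := ih' m
    rw [← add_zero (∑ i ∈ range (n + 2), _), ← zero_mul (∏ t : Fin n, x t.succ (m - (n + 2 : ℕ))),
      ← lucasCoeff_succ_self (q := q) hu0 (n + 1), ← sum_range_succ, sum_range_succ'] at h1
    have h2 := ih' (m - 1)
    rw [sum_range_succ']
    simp only [Fin.prod_univ_succ]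
    have hterm : ∀ i ∈ range (n + 2),
        lucasCoeff q u (n + 1 + 1) (i + 1) *
          (x 0 (m - (i + 1 : ℕ)) * ∏ t : Fin n, x t.succ (m - (i + 1 : ℕ))) =
        x 0 m * (lucasCoeff q u (n + 1) (i + 1) * ∏ t : Fin n, x t.succ (m - (i + 1 : ℕ))) -
        q ^ (n + 1) * x 0 (m - (n + 1 : ℕ) - 1) *
          (lucasCoeff q u (n + 1) i * ∏ t : Fin n, x t.succ (m - 1 - i)) := by
      intro i hi
      have hi' : i ≤ n + 1 := by have := mem_range.1 hi; omega
      have h := lucasCoeff_succ_mul hu hu0 hu1 (hx 0) hi' (hnz i hi') m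
      rw [show m - 1 - (i : ℤ) = m - (i + 1 : ℕ) by push_cast; ring]
      rw [show m - ((i : ℤ) + 1) = m - (i + 1 : ℕ) by push_cast; ring] at h
      linear_combination (∏ t : Fin n, x t.succ (m - (i + 1 : ℕ))) * h
    rw [sum_congr rfl hterm, sum_sub_distrib, ← mul_sum, ← mul_sum, h2]
    have h0 : ∀ N, lucasCoeff q u N 0 = 1 := fun N => by simp [lucasCoeff]
    simp only [h0, lucasCoeff_succ_self hu0 (n + 1), Nat.cast_zero, sub_zero, zero_mul] at h1 ⊢
    linear_combination x 0 m * h1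

/-- Proposition 3.2, nontrivial case: if `u_1 u_2 ⋯ u_{n+1} ≠ 0`,
then a product `X` of `n` `(p,q)`-recursive sequences satisfies
`Σ_{i=0}^{n+1} (−1)^i q^{i(i−1)/2} (n+1 | i)_u X(m−i) = 0`, where
`(m | k)_u = (u_m ⋯ u_{m−k+1})/(u_k ⋯ u_1)` is the generalized binomial coefficient. -/
theorem product_recurrence_nontrivial (n : ℕ) (hn : 1 ≤ n) (p q : ℂ) (hq : q ≠ 0)
    (u : ℤ → ℂ)
    (hu : ∀ m : ℤ, u m = p * u (m - 1) - q * u (m - 2))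
    (hu0 : u 0 = 0) (hu1 : u 1 = 1)
    (hnz : (∏ k ∈ Icc 1 (n + 1), u k) ≠ 0)
    (x : Fin n → ℤ → ℂ)
    (hx : ∀ i : Fin n, ∀ m : ℤ, x i m = p * x i (m - 1) - q * x i (m - 2)) :
    ∀ m : ℤ, ∑ i ∈ range (n + 2),
      (-1 : ℂ) ^ i * q ^ (i * (i - 1) / 2) *
        ((∏ j ∈ range i, u ((n : ℤ) + 1 - j)) / (∏ j ∈ range i, u (j + 1))) *
        (∏ t, x t (m - i)) = 0 := by
  intro m
  have hnz' : ∀ k : ℕ, k ≤ n → u (k + 1) ≠ 0 := fun k hk => by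
    exact_mod_cast prod_ne_zero_iff.1 hnz (k + 1) (mem_Icc.2 ⟨by omega, by omega⟩)
  simpa [lucasCoeff] using sum_lucasCoeff_mul_prod hu hu0 hu1 n hnz' x hx m
end

section
/- Let n ≥ 1, let p, q ∈ ℂ with q ≠ 0, and let u be the (p,q)-recursive sequence with u_0 = 0, u_1 = 1. Suppose u_k = 0 for some k with 1 ≤ k ≤ n+1. Let x_1, …, x_n : ℤ → ℂ each be (p,q)-recursive and set X(m) = x_1(m)·x_2(m)⋯x_n(m). Then for all m ∈ ℤ, X(m+k) = u_{k+1}^n · X(m). -/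
/-!
Every `(p,q)`-recursive sequence `y` satisfies
`y (m + j) = u (j + 1) * y m - q * u j * y (m - 1)` (`recursive_add`), by two-step induction on `j`.
When `u k = 0` the second term vanishes, so a shift by `k` multiplies each of the `n` factors by the
same constant `u (k + 1)`; taking the product over the factors gives the `n`-th power.
-/

open Finset

/-- Addition formula: a `(p,q)`-recursive sequence is expressed through two consecutive values,
with coefficients given by the fundamental solution `u`. -/
lemma recursive_add (p q : ℂ) (u : ℤ → ℂ)
    (hu : ∀ m : ℤ, u m = p * u (m - 1) - q * u (m - 2))
    (hu0 : u 0 = 0) (hu1 : u 1 = 1) (y : ℤ → ℂ)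
    (hy : ∀ m : ℤ, y m = p * y (m - 1) - q * y (m - 2)) (m : ℤ) (j : ℕ) :
    y (m + j) = u ((j : ℤ) + 1) * y m - q * u j * y (m - 1) := by
  induction j using Nat.twoStepInduction with
  | zero => simp [hu0, hu1]
  | one =>
    have h2 : u 2 = p := by
      have h := hu 2
      norm_num [hu0, hu1] at h
      exact h
    have h := hy (m + 1)
    rw [show m + 1 - 1 = m by ring, show m + 1 - 2 = m - 1 by ring] at h
    norm_num [hu1, h2]
    exact h
  | more j ih0 ih1 =>
    have h := hy (m + (j + 2))
    have h2 := hu ((j : ℤ) + 2)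
    have h3 := hu ((j : ℤ) + 2 + 1)
    push_cast at ih0 ih1 ⊢
    rw [show m + ((j : ℤ) + 2) - 1 = m + (j + 1) by ring,
      show m + ((j : ℤ) + 2) - 2 = m + j by ring] at h
    rw [show (j : ℤ) + 2 - 1 = j + 1 by ring, show (j : ℤ) + 2 - 2 = j by ring] at h2
    rw [show (j : ℤ) + 2 + 1 - 1 = j + 1 + 1 by ring,
      show (j : ℤ) + 2 + 1 - 2 = j + 1 by ring] at h3
    rw [h, h3, h2, ih0, ih1]
    ring

/-- Proposition 3.3, trivial case: if `u_k = 0` for some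
`1 ≤ k ≤ n+1`, then a product `X` of `n` `(p,q)`-recursive sequences satisfies
`X(m+k) = u_{k+1}^n · X(m)`. -/
theorem product_recurrence_trivial (n : ℕ) (hn : 1 ≤ n) (p q : ℂ) (hq : q ≠ 0)
    (u : ℤ → ℂ)
    (hu : ∀ m : ℤ, u m = p * u (m - 1) - q * u (m - 2))
    (hu0 : u 0 = 0) (hu1 : u 1 = 1)
    (k : ℕ) (hk1 : 1 ≤ k) (hk2 : k ≤ n + 1) (huk : u k = 0)
    (x : Fin n → ℤ → ℂ)
    (hx : ∀ i : Fin n, ∀ m : ℤ, x i m = p * x i (m - 1) - q * x i (m - 2)) :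
    ∀ m : ℤ, (∏ i, x i (m + k)) = (u ((k : ℤ) + 1)) ^ n * ∏ i, x i m := by
  intro m
  have h : ∀ i, x i (m + k) = u ((k : ℤ) + 1) * x i m := fun i => by
    rw [recursive_add p q u hu hu0 hu1 (x i) (hx i) m k, huk]
    ring
  simp [h, prod_mul_distrib]
end

section
/- Let p, q ∈ ℂ with q ≠ 0, let W : ℤ → ℂ be a (p,q)-recursive sequence, and fix r ∈ ℤ. Then each of the three sequences A(m) = W_{2m}, B(m) = W_m·W_{m+r}, and C(m) = q^m satisfies the recurrence X(m+3) = (p² − q)·X(m+2) + (q² − p²q)·X(m+1) + q³·X(m) for all m ∈ ℤ. -/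
/-!
If `α, β` are the roots of `x² - p x + q`, then the cubic recurrence has characteristic polynomial
`(x - q) (x² - (p² - 2q) x + q²) = (x - αβ) (x - α²) (x - β²)`.  The sequence `q ^ m` is killed by
the first factor, `W (2m)` by the product of the other two, and `W m * W (m + r)` by all three.
Without mentioning the roots, each claim becomes a polynomial identity once every term is expressed
through two consecutive values of `W` (and of its shift by `r`), or through `q ^ m`.
-/

/-- Corollary 3.5: for a `(p,q)`-recursive `W` and fixed `r`, each of
`A(m) = W(2m)`, `B(m) = W(m)·W(m+r)`, `C(m) = q^m` satisfies
`X(m+3) = (p²−q)·X(m+2) + (q²−p²q)·X(m+1) + q³·X(m)`. -/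
theorem corollary_three_five (p q : ℂ) (hq : q ≠ 0) (W : ℤ → ℂ)
    (hW : ∀ m : ℤ, W m = p * W (m - 1) - q * W (m - 2)) (r : ℤ) :
    (∀ m : ℤ, W (2 * (m + 3)) =
        (p ^ 2 - q) * W (2 * (m + 2)) + (q ^ 2 - p ^ 2 * q) * W (2 * (m + 1))
          + q ^ 3 * W (2 * m)) ∧
    (∀ m : ℤ, W (m + 3) * W (m + 3 + r) =
        (p ^ 2 - q) * (W (m + 2) * W (m + 2 + r))
          + (q ^ 2 - p ^ 2 * q) * (W (m + 1) * W (m + 1 + r))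
          + q ^ 3 * (W m * W (m + r))) ∧
    (∀ m : ℤ, q ^ (m + 3) =
        (p ^ 2 - q) * q ^ (m + 2) + (q ^ 2 - p ^ 2 * q) * q ^ (m + 1)
          + q ^ 3 * q ^ m) := by
  -- The recurrence shifted forwards, with the indices in a form that can be supplied by `ring`.
  have step : ∀ a b c : ℤ, b = a + 1 → c = a + 2 → W c = p * W b - q * W a := by
    rintro a _ _ rfl rfl
    rw [hW (a + 2), show a + 2 - 1 = a + 1 by ring, show a + 2 - 2 = a by ring]
  refine ⟨fun m => ?_, fun m => ?_, fun m => ?_⟩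
  · rw [step (2 * m + 4) (2 * m + 5) (2 * (m + 3)) (by ring) (by ring),
      step (2 * m + 3) (2 * m + 4) (2 * m + 5) (by ring) (by ring),
      show 2 * (m + 2) = 2 * m + 4 by ring, show 2 * (m + 1) = 2 * m + 2 by ring,
      step (2 * m + 2) (2 * m + 3) (2 * m + 4) (by ring) (by ring),
      step (2 * m + 1) (2 * m + 2) (2 * m + 3) (by ring) (by ring),
      step (2 * m) (2 * m + 1) (2 * m + 2) (by ring) (by ring)]
    ring
  · rw [step (m + 1) (m + 2) (m + 3) (by ring) (by ring),
      step m (m + 1) (m + 2) (by ring) (by ring),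
      step (m + 1 + r) (m + 2 + r) (m + 3 + r) (by ring) (by ring),
      step (m + r) (m + 1 + r) (m + 2 + r) (by ring) (by ring)]
    ring
  · rw [zpow_add₀ hq, zpow_add₀ hq, zpow_add₀ hq]
    norm_cast
    ring
end

section
/- Let v ≥ 1, let p, q ∈ ℂ with q ≠ 0, let u be the (p,q)-recursive sequence with u_0 = 0, u_1 = 1, and suppose u_1·u_2⋯u_v ≠ 0. Let Q_v be the v × v matrix over ℂ whose (i,j) entry (1 ≤ i, j ≤ v) equals C(v−j, i−1)·p^{(v−j)−(i−1)}·(−q)^{i−1} when i−1 ≤ v−j, and 0 otherwise. Then the characteristic polynomial of Q_v is det(x·I − Q_v) = Σ_{i=0}^{v} (−1)^i · q^{i(i−1)/2} · (v | i)_u · x^{v−i}. -/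
/-!
Write `n = v - 1` and let `α`, `β` be the roots of `X² - pX + q`, so `α + β = p` and `αβ = q`.
Column `j` of the matrix holds the coefficients of `(p - qX)^(n-j)`, so the matrix represents
`X^j ↦ (p - qX)^(n-j)` on polynomials of degree at most `n`. After homogenizing, this is the `n`-th
symmetric power of the substitution `x ↦ px - qy`, `y ↦ x`. The linear form `l = x - βy` is an
eigenvector, `l ↦ αl`, while `y ↦ l + βy`; hence in the basis `l^(n-j) y^j` the operator is upper
triangular with diagonal entries `α^(n-j) β^j`. The change of basis is unitriangular, so no case
distinction on `α = β` is needed, and the characteristic polynomial is `∏ (X - α^(n-j) β^j)`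
(`charpoly_eq_prod`).

This product is expanded by `prod_sub_eq_sum`, a version of the `q`-binomial theorem. Its proof is
an induction resting on the Pascal-type recurrence `genBinom_succ_succ`, itself a consequence of the
addition formula `u (a + b) = α^a u b + β^b u a` (`rec_add_eq`).
-/

open Finset Polynomial

section Lucas

variable {p q α β : ℂ} {u : ℤ → ℂ}

theorem rec_succ_eq
    (hu : ∀ m : ℤ, u m = p * u (m - 1) - q * u (m - 2)) (hu0 : u 0 = 0) (hu1 : u 1 = 1)
    (hp : α + β = p) (hq : α * β = q) (n : ℕ) :
    u ((n : ℤ) + 1) = β * u n + α ^ n := by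
  induction n with
  | zero => simp [hu0, hu1]
  | succ n ih =>
    have h := hu ((n : ℤ) + 1 + 1)
    rw [show (n : ℤ) + 1 + 1 - 1 = n + 1 by ring, show (n : ℤ) + 1 + 1 - 2 = n by ring] at h
    push_cast
    rw [h, pow_succ, ← hp, ← hq]
    linear_combination α * ih

/-- The addition formula behind the Pascal-type recurrence of the generalized binomial
coefficients. -/
theorem rec_add_eq
    (hu : ∀ m : ℤ, u m = p * u (m - 1) - q * u (m - 2)) (hu0 : u 0 = 0) (hu1 : u 1 = 1)
    (hp : α + β = p) (hq : α * β = q) (a b : ℕ) :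
    u ((a : ℤ) + b) = α ^ a * u b + β ^ b * u a := by
  induction b with
  | zero => simp [hu0]
  | succ b ih =>
    have h1 := rec_succ_eq hu hu0 hu1 hp hq b
    have h2 := rec_succ_eq hu hu0 hu1 hp hq (a + b)
    push_cast at h2 ⊢
    rw [← add_assoc, h2, h1, ih]
    ring

/-- The generalized binomial coefficient `(m | k)_u`, for `k` possibly exceeding `m`
(the value is then `0` as soon as `u 0 = 0`). -/
noncomputable def genBinom (u : ℤ → ℂ) (m k : ℕ) : ℂ :=
  (∏ j ∈ range k, u ((m : ℤ) - j)) / (∏ j ∈ range k, u (j + 1))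

theorem genBinom_succ_self (hu0 : u 0 = 0) (m : ℕ) : genBinom u m (m + 1) = 0 := by
  simp [genBinom, prod_range_succ, hu0]

theorem genBinom_succ_succ
    (hu : ∀ m : ℤ, u m = p * u (m - 1) - q * u (m - 2)) (hu0 : u 0 = 0) (hu1 : u 1 = 1)
    (hp : α + β = p) (hq : α * β = q) {m k : ℕ} (hk : k ≤ m)
    (hnz : ∀ j : ℕ, j ≤ m → u (j + 1) ≠ 0) :
    genBinom u (m + 1) (k + 1) =
      α ^ (k + 1) * genBinom u m (k + 1) + β ^ (m - k) * genBinom u m k := by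
  have hD : ∏ j ∈ range k, u ((j : ℤ) + 1) ≠ 0 := by
    refine prod_ne_zero_iff.2 fun j hj => hnz j ?_
    have := mem_range.1 hj
    omega
  have hk1 := hnz k hk
  have hN : ∏ j ∈ range (k + 1), u (((m + 1 : ℕ) : ℤ) - j) =
      u ((m : ℤ) + 1) * ∏ j ∈ range k, u ((m : ℤ) - j) := by
    rw [prod_range_succ', mul_comm]
    congr 1
    simp
  have hadd := rec_add_eq hu hu0 hu1 hp hq (k + 1) (m - k)
  rw [Nat.cast_sub hk, show ((k + 1 : ℕ) : ℤ) + ((m : ℤ) - k) = m + 1 by push_cast; ring] at hadd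
  push_cast at hadd
  unfold genBinom
  rw [hN, prod_range_succ, prod_range_succ, hadd]
  field_simp

/-- A two-parameter `q`-binomial theorem. The homogenizing variable `s` makes the induction
possible: passing from `m` to `m + 1` replaces `s` by `s * α`. -/
theorem prod_sub_eq_sum
    (hu : ∀ m : ℤ, u m = p * u (m - 1) - q * u (m - 2)) (hu0 : u 0 = 0) (hu1 : u 1 = 1)
    (hp : α + β = p) (hq : α * β = q) (m : ℕ)
    (hnz : ∀ j : ℕ, j < m → u (j + 1) ≠ 0) (x s : ℂ) :
    ∏ j ∈ range m, (x - s * (α ^ (m - 1 - j) * β ^ j)) =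
      ∑ i ∈ range (m + 1),
        (-1) ^ i * q ^ (i * (i - 1) / 2) * genBinom u m i * s ^ i * x ^ (m - i) := by
  induction m generalizing s with
  | zero => simp [genBinom]
  | succ m ih =>
    have hprod : ∏ j ∈ range m, (x - s * (α ^ (m + 1 - 1 - j) * β ^ j)) =
        ∏ j ∈ range m, (x - (s * α) * (α ^ (m - 1 - j) * β ^ j)) := by
      refine prod_congr rfl fun j hj => ?_
      have := mem_range.1 hj
      rw [show m + 1 - 1 - j = (m - 1 - j) + 1 by omega]
      ring
    rw [prod_range_succ, hprod, ih (fun j hj => hnz j (by omega)) (s * α)]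
    set c : ℕ → ℂ := fun i =>
      (-1) ^ i * q ^ (i * (i - 1) / 2) * genBinom u m i * (s * α) ^ i with hc
    have hcm : c (m + 1) = 0 := by simp [hc, genBinom_succ_self hu0]
    have hshift : (∑ i ∈ range (m + 1), c i * x ^ (m - i)) * x =
        ∑ i ∈ range (m + 1), c (i + 1) * x ^ (m - i) + c 0 * x ^ (m + 1) := by
      have h : (∑ i ∈ range (m + 1), c i * x ^ (m - i)) * x =
          ∑ i ∈ range (m + 2), c i * x ^ (m + 1 - i) := by
        rw [sum_range_succ _ (m + 1), hcm, zero_mul, add_zero, sum_mul]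
        refine sum_congr rfl fun i hi => ?_
        have := mem_range.1 hi
        rw [show m + 1 - i = (m - i) + 1 by omega]
        ring
      rw [h, sum_range_succ']
      simp
    rw [mul_sub, hshift, sum_range_succ' _ (m + 1), add_sub_right_comm, sum_mul,
      ← sum_sub_distrib]
    congr 1
    -- The `i = 0` terms on both sides agree definitionally; the terms of index `i + 1` remain.
    · refine sum_congr rfl fun i hi => ?_
      have hi' : i ≤ m := Nat.lt_succ_iff.1 (mem_range.1 hi)
      have hT : (i + 1) * (i + 1 - 1) / 2 = i * (i - 1) / 2 + i := by
        rw [← Finset.sum_range_id, ← Finset.sum_range_id, sum_range_succ]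
      have hsub : m + 1 - 1 - m = 0 := by omega
      obtain ⟨d, rfl⟩ := Nat.exists_eq_add_of_le hi'
      rw [genBinom_succ_succ hu hu0 hu1 hp hq hi' (fun j hj => hnz j (by omega))]
      simp only [hc, hT, hsub, Nat.add_sub_add_right, Nat.add_sub_cancel_left, pow_zero, ← hq]
      ring

end Lucas

theorem coeff_C_add_C_mul_X_pow (a b : ℂ) (m t : ℕ) :
    ((C a + C b * X : ℂ[X]) ^ m).coeff t = m.choose t * a ^ (m - t) * b ^ t := by
  have h : (C a + C b * X : ℂ[X]) ^ m =
      ∑ k ∈ range (m + 1), C ((m.choose k : ℂ) * a ^ (m - k) * b ^ k) * X ^ k := by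
    rw [add_comm, add_pow]
    refine sum_congr rfl fun k _ => ?_
    simp only [map_mul, map_pow, map_natCast]
    ring
  rw [h, finsetSum_coeff]
  simp only [coeff_C_mul_X_pow, sum_ite_eq, mem_range]
  split_ifs with ht
  · rfl
  · rw [Nat.choose_eq_zero_of_lt (by omega)]
    simp

/-- The polynomials `(1 - βX)^(n-j) X^j`; for `0 ≤ j ≤ n` they form a basis of the polynomials of
degree at most `n`. -/
noncomputable def flag (β : ℂ) (n j : ℕ) : ℂ[X] := (C 1 + C (-β) * X) ^ (n - j) * X ^ j

/-- Substituting `z` for the homogenizing variable and `1` for `X` in the homogenization of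
`flag β n j`. -/
theorem sum_coeff_flag (β : ℂ) {n j : ℕ} (hj : j ≤ n) (z : ℂ[X]) :
    ∑ k ∈ range (n + 1), z ^ (n - k) * C ((flag β n j).coeff k) = (z - C β) ^ (n - j) := by
  obtain ⟨m, rfl⟩ := Nat.exists_eq_add_of_le hj
  rw [add_assoc, sum_range_add, sum_eq_zero, zero_add, Nat.add_sub_cancel_left, sub_eq_add_neg,
    add_comm z, add_pow]
  · refine sum_congr rfl fun t _ => ?_
    rw [flag, add_comm j t, coeff_mul_X_pow, coeff_C_add_C_mul_X_pow, add_comm t j,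
      Nat.add_sub_cancel_left, Nat.add_sub_add_left]
    simp only [map_mul, map_pow, map_natCast, map_neg, one_pow, mul_one]
    ring
  · intro k hk
    rw [flag, coeff_mul_X_pow', if_neg (by have := mem_range.1 hk; omega)]
    simp

/-- Expansion of `1 = ((1 - βX) + βX)^j` in the polynomials `flag β n k`, after multiplication by
`(1 - βX)^(n-j)`. -/
theorem sum_flag (β : ℂ) {n j : ℕ} (hj : j ≤ n) :
    ∑ k ∈ range (n + 1), flag β n k * C ((j.choose k : ℂ) * β ^ k) =
      (C 1 + C (-β) * X) ^ (n - j) := by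
  obtain ⟨m, rfl⟩ := Nat.exists_eq_add_of_le hj
  have h1 : (C β * X + (C 1 + C (-β) * X) : ℂ[X]) ^ j = 1 := by
    simp
  rw [show j + m + 1 = (j + 1) + m by ring, sum_range_add, sum_eq_zero (s := range m), add_zero,
    Nat.add_sub_cancel_left, ← mul_one ((C 1 + C (-β) * X : ℂ[X]) ^ m), ← h1, add_pow (C β * X),
    mul_sum]
  · refine sum_congr rfl fun k hk => ?_
    have := mem_range.1 hk
    rw [flag, show j + m - k = m + (j - k) by omega, pow_add]
    simp only [map_mul, map_pow, map_natCast]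
    ring
  · intro k _
    rw [Nat.choose_eq_zero_of_lt (by omega)]
    simp

/-- The matrix of the operator `X ^ j ↦ (p - qX) ^ (n - j)` in the monomial basis becomes upper
triangular in the basis `flag β n`, with diagonal entries `α ^ (n - j) β ^ j`. -/
theorem charpoly_eq_prod_of_coeff (n : ℕ) {p q α β : ℂ} (hp : α + β = p) (hq : α * β = q)
    (Q : Matrix (Fin (n + 1)) (Fin (n + 1)) ℂ)
    (hQc : ∀ i j, Q i j = ((C p + C (-q) * X : ℂ[X]) ^ (n - (j : ℕ))).coeff i) :
    Q.charpoly = ∏ j ∈ range (n + 1), (X - C (α ^ (n - j) * β ^ j)) := by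
  let P : Matrix (Fin (n + 1)) (Fin (n + 1)) ℂ := Matrix.of fun i j => (flag β n j).coeff i
  let T : Matrix (Fin (n + 1)) (Fin (n + 1)) ℂ := Matrix.of fun k j =>
    ((j : ℕ).choose k : ℂ) * β ^ (k : ℕ) * α ^ (n - (j : ℕ))
  have hPdet : P.det = 1 := by
    rw [Matrix.det_of_isLowerTriangular]
    · refine prod_eq_one fun j _ => ?_
      simp only [P, Matrix.of_apply, flag, coeff_mul_X_pow', coeff_C_add_C_mul_X_pow]
      simp
    · intro i j hij
      have : (i : ℕ) < j := hij
      simp only [P, Matrix.of_apply]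
      rw [flag, coeff_mul_X_pow', if_neg (by omega)]
  have hQP : Q * P = P * T := by
    ext i j
    have hj : (j : ℕ) ≤ n := Nat.lt_succ_iff.1 j.2
    have hL : (Q * P) i j =
        (∑ k ∈ range (n + 1), (C p + C (-q) * X) ^ (n - k) * C ((flag β n j).coeff k)).coeff i := by
      rw [Matrix.mul_apply, finsetSum_coeff, ← Fin.sum_univ_eq_sum_range
        (fun k => ((C p + C (-q) * X : ℂ[X]) ^ (n - k) * C ((flag β n j).coeff k)).coeff (i : ℕ))]
      exact sum_congr rfl fun k _ => by rw [coeff_mul_C, hQc]; rfl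
    have hR : (P * T) i j =
        (C (α ^ (n - (j : ℕ))) *
          ∑ k ∈ range (n + 1), flag β n k * C (((j : ℕ).choose k : ℂ) * β ^ k)).coeff i := by
      rw [Matrix.mul_apply, coeff_C_mul, finsetSum_coeff, ← Fin.sum_univ_eq_sum_range
        (fun k => (flag β n k * C (((j : ℕ).choose k : ℂ) * β ^ k)).coeff (i : ℕ)), mul_sum]
      refine sum_congr rfl fun k _ => ?_
      rw [coeff_mul_C]
      simp only [P, T, Matrix.of_apply]
      ring
    rw [hL, hR, sum_coeff_flag β hj, sum_flag β hj, map_pow, ← mul_pow]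
    congr 2
    rw [← hp, ← hq]
    simp only [map_add, map_neg, map_mul, map_one]
    ring
  have hPu : IsUnit P := (Matrix.isUnit_iff_isUnit_det P).2 (by simp [hPdet])
  obtain ⟨U, hU⟩ := hPu
  have hconj : Q = U.val * T * U⁻¹.val := by
    rw [hU, ← hQP, ← hU, mul_assoc, Units.mul_inv, mul_one]
  rw [hconj, Matrix.coe_units_inv, Matrix.charpoly_units_conj,
    Matrix.charpoly_of_isUpperTriangular]
  · rw [← Fin.prod_univ_eq_prod_range (fun j => (X - C (α ^ (n - j) * β ^ j) : ℂ[X]))]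
    refine prod_congr rfl fun j _ => ?_
    simp [T, mul_comm]
  · intro k j hkj
    have : (j : ℕ) < k := hkj
    simp [T, Nat.choose_eq_zero_of_lt this]

theorem charpoly_eq_prod (v : ℕ) (p q α β : ℂ) (hp : α + β = p) (hq : α * β = q) :
    (Matrix.of fun i j : Fin v =>
      if (i : ℕ) ≤ v - 1 - (j : ℕ) then
        (Nat.choose (v - 1 - (j : ℕ)) (i : ℕ) : ℂ) *
          p ^ (v - 1 - (j : ℕ) - (i : ℕ)) * (-q) ^ (i : ℕ)
      else 0).charpoly =
    ∏ j ∈ range v, (X - C (α ^ (v - 1 - j) * β ^ j)) := by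
  rcases v with _ | n
  · simp [Matrix.charpoly]
  simp only [Nat.add_sub_cancel]
  refine charpoly_eq_prod_of_coeff n hp hq _ fun i j => ?_
  rw [coeff_C_add_C_mul_X_pow, Matrix.of_apply]
  split_ifs with h
  · rfl
  · rw [Nat.choose_eq_zero_of_lt (by omega)]
    simp

/-- Corollary 3.6: the characteristic polynomial of `Q_v` is
`Σ_{i=0}^{v} (−1)^i q^{i(i−1)/2} (v | i)_u x^{v−i}`, where `(v | i)_u` is the
generalized binomial coefficient of the fundamental `(p,q)`-recursive sequence. -/
theorem charpoly_Q_matrix (v : ℕ) (hv : 1 ≤ v) (p q : ℂ) (hq : q ≠ 0)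
    (u : ℤ → ℂ)
    (hu : ∀ m : ℤ, u m = p * u (m - 1) - q * u (m - 2))
    (hu0 : u 0 = 0) (hu1 : u 1 = 1)
    (hnz : (∏ k ∈ Icc 1 v, u k) ≠ 0) :
    (Matrix.of fun i j : Fin v =>
      if (i : ℕ) ≤ v - 1 - (j : ℕ) then
        (Nat.choose (v - 1 - (j : ℕ)) (i : ℕ) : ℂ) *
          p ^ (v - 1 - (j : ℕ) - (i : ℕ)) * (-q) ^ (i : ℕ)
      else 0).charpoly =
    ∑ i ∈ range (v + 1),
      Polynomial.C ((-1 : ℂ) ^ i * q ^ (i * (i - 1) / 2) *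
        ((∏ j ∈ range i, u ((v : ℤ) - j)) / (∏ j ∈ range i, u (j + 1)))) *
        Polynomial.X ^ (v - i) := by
  obtain ⟨α, β, hp, hq'⟩ : ∃ α β : ℂ, α + β = p ∧ α * β = q := by
    -- `α` is a root of `X ^ 2 - p X + q`, and `β = p - α` is the other one.
    obtain ⟨α, hα⟩ := IsAlgClosed.exists_eq_mul_self (p ^ 2 - 4 * q)
    exact ⟨(p + α) / 2, (p - α) / 2, by ring, by linear_combination hα / 4⟩
  have hnz' : ∀ j : ℕ, j < v → u (j + 1) ≠ 0 := by
    intro j hj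
    exact_mod_cast prod_ne_zero_iff.1 hnz (j + 1) (mem_Icc.2 ⟨by omega, by omega⟩)
  rw [charpoly_eq_prod v p q α β hp hq']
  refine Polynomial.funext fun x => ?_
  have h := prod_sub_eq_sum hu hu0 hu1 hp hq' v hnz' x 1
  simp only [one_mul, one_pow, mul_one, genBinom] at h
  simpa [eval_prod, eval_finsetSum] using h
end

section
/- Let n ≥ 1, p, q ∈ ℂ, and let u : ℕ → ℂ be the sequence with u_0 = 0, u_1 = 1 and u_m = p·u_{m−1} − q·u_{m−2} for m ≥ 2. Let A_1 be the n × n matrix with (i,j) entry u_{i+1}^{n−j}·u_i^{j−1} (1 ≤ i, j ≤ n), and let Q_n be the n × n matrix whose (i,j) entry equals C(n−j, i−1)·p^{(n−j)−(i−1)}·(−q)^{i−1} when i−1 ≤ n−j, and 0 otherwise. Then the product A_1·Q_n is the n × n matrix with (i,j) entry u_{i+2}^{n−j}·u_{i+1}^{j−1}; that is, right multiplication by Q_n shifts all indices of A_1 up by one. -/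
/-!
Writing `a = u_{i+1}`, `b = u_i` for a fixed row `i` and `N = n - j` for a fixed column `j`
(1-based), the recurrence gives `u_{i+2} = p a - q b`. The `(i, j)` entry of the product is
`a ^ (j - 1)` times the binomial expansion of `(p a - q b) ^ N`: the factor `a ^ (j - 1)` splits
off because every nonzero term of the sum has `k ≤ N`, where `k` is the 0-based summation index.
-/

/-- eq. (A5): right multiplication of `A₁` (entries
`u_{i+1}^{n−j} u_i^{j−1}`, 1-based) by `Q_n` shifts all indices up by one. -/
theorem A1_mul_Q_shifts_indices (n : ℕ) (hn : 1 ≤ n) (p q : ℂ) (u : ℕ → ℂ)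
    (hu0 : u 0 = 0) (hu1 : u 1 = 1)
    (hu : ∀ m : ℕ, 2 ≤ m → u m = p * u (m - 1) - q * u (m - 2)) :
    (Matrix.of fun i j : Fin n =>
        u ((i : ℕ) + 2) ^ (n - 1 - (j : ℕ)) * u ((i : ℕ) + 1) ^ (j : ℕ)) *
    (Matrix.of fun i j : Fin n =>
        if (i : ℕ) ≤ n - 1 - (j : ℕ) then
          (Nat.choose (n - 1 - (j : ℕ)) (i : ℕ) : ℂ) *
            p ^ (n - 1 - (j : ℕ) - (i : ℕ)) * (-q) ^ (i : ℕ)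
        else 0) =
    Matrix.of (fun i j : Fin n =>
        u ((i : ℕ) + 3) ^ (n - 1 - (j : ℕ)) * u ((i : ℕ) + 2) ^ (j : ℕ)) := by
  ext i j
  have hrec : u ((i : ℕ) + 3) = -q * u ((i : ℕ) + 1) + p * u ((i : ℕ) + 2) := by
    rw [hu ((i : ℕ) + 3) (by omega), show (i : ℕ) + 3 - 1 = i + 2 by omega,
      show (i : ℕ) + 3 - 2 = i + 1 by omega]
    ring
  simp only [Matrix.mul_apply, Matrix.of_apply]
  rw [hrec, add_pow, Finset.sum_mul]
  generalize u ((i : ℕ) + 2) = a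
  generalize u ((i : ℕ) + 1) = b
  have hj := j.isLt
  rw [Fin.sum_univ_eq_sum_range (fun k => a ^ (n - 1 - k) * b ^ k *
    (if k ≤ n - 1 - (j : ℕ) then (Nat.choose (n - 1 - (j : ℕ)) k : ℂ) *
      p ^ (n - 1 - (j : ℕ) - k) * (-q) ^ k else 0)) n]
  symm
  apply Finset.sum_subset_zero_on_sdiff
  · intro k hk
    simp only [Finset.mem_range] at hk ⊢
    omega
  · intro k hk
    simp only [Finset.mem_sdiff, Finset.mem_range] at hk
    rw [if_neg (by omega), mul_zero]
  · intro k hk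
    simp only [Finset.mem_range] at hk
    rw [if_pos (by omega), show n - 1 - k = (n - 1 - (j : ℕ) - k) + j by omega,
      pow_add, mul_pow, mul_pow]
    ring
end

section
/- Let n ≥ 1, p, q ∈ ℂ with q ≠ 0, and let u : ℕ → ℂ be the sequence with u_0 = 0, u_1 = 1 and u_m = p·u_{m−1} − q·u_{m−2} for m ≥ 2. Let A_1 be the n × n matrix with (i,j) entry u_{i+1}^{n−j}·u_i^{j−1} (1 ≤ i, j ≤ n). Then det A_1 = (∏_{k=2}^{n} q^{k(k−1)/2}) · (∏_{k=1}^{n−2} ∏_{i=2}^{k+1} u_i). In particular, if u_2, …, u_{n−1} are all nonzero then det A_1 ≠ 0. -/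
/-!
The matrix is the projective Vandermonde matrix of the
points `(u_{i+1} : u_{i+2})`, so its determinant is the product over `i < j` of the `2 × 2` minors
`u_{j+1} u_{i+2} - u_{i+1} u_{j+2}`. By d'Ocagne's identity (`docagne`) such a minor equals
`q ^ (i + 1) * u_{j-i}`. For fixed `j`, the powers of `q` multiply to
`q ^ (1 + 2 + ⋯ + j)` and the other factors to `u_1 u_2 ⋯ u_j`, where `u_1 = 1` (`prod_column`);
taking the product over `j` gives the formula.
-/

open Finset

/-- d'Ocagne's identity for the Lucas sequence `u`. -/
lemma docagne (p q : ℂ) (u : ℕ → ℂ) (hu0 : u 0 = 0) (hu1 : u 1 = 1)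
    (hu : ∀ m : ℕ, u (m + 2) = p * u (m + 1) - q * u m) (i d : ℕ) :
    u (i + d) * u (i + 1) - u i * u (i + d + 1) = q ^ i * u d := by
  induction i with
  | zero => simp [hu0, hu1]
  | succ i ih =>
    have h1 := hu (i + d)
    have h2 := hu i
    rw [show i + 1 + d + 1 = i + d + 2 by ring, show i + 1 + d = i + d + 1 by ring,
      show i + 1 + 1 = i + 2 by ring, h1, h2, pow_succ]
    linear_combination q * ih

/-- The product of the minors `q ^ (i + 1) * u_{j-i}` over all `i < j`, for fixed `j`. -/
lemma prod_column (q : ℂ) (u : ℕ → ℂ) (hu1 : u 1 = 1) (j : ℕ) :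
    ∏ i ∈ range j, q ^ (i + 1) * u (j - i) =
      q ^ ((j + 1) * j / 2) * ∏ i ∈ Icc 2 j, u i := by
  have hq : ∑ i ∈ range j, (i + 1) = (j + 1) * j / 2 := by
    have := Finset.sum_range_id (j + 1)
    rw [Finset.sum_range_succ'] at this
    simpa using this
  have hr : ∏ i ∈ range j, u (j - i) = ∏ i ∈ range j, u (i + 1) := by
    rw [← Finset.prod_range_reflect]
    refine Finset.prod_congr rfl fun i hi => ?_
    have := Finset.mem_range.1 hi
    congr 1
    omega
  have hs : ∏ i ∈ range j, u (i + 1) = ∏ i ∈ Icc 2 j, u i := by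
    clear hq hr
    induction j with
    | zero => simp
    | succ j ih =>
      rw [Finset.prod_range_succ, ih]
      rcases Nat.eq_zero_or_pos j with rfl | hj
      · simp [hu1]
      · rw [Finset.prod_Icc_succ_top (by omega)]
  rw [Finset.prod_mul_distrib, Finset.prod_pow_eq_pow_sum, hq, hr, hs]

/-- The product over `j < n`, regrouped with the shifted indices `k = j + 1` for the powers of `q`
and `k = j - 1` for the factors `u i`; the terms lost at the lower end equal 1. -/
lemma prod_regroup (q : ℂ) (u : ℕ → ℂ) (n : ℕ) :
    ∏ j ∈ range (n + 1), q ^ ((j + 1) * j / 2) * ∏ i ∈ Icc 2 j, u i =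
      (∏ k ∈ Icc 2 (n + 1), q ^ (k * (k - 1) / 2)) *
        ∏ k ∈ Icc 1 (n - 1), ∏ i ∈ Icc 2 (k + 1), u i := by
  induction n with
  | zero => simp
  | succ n ih =>
    rw [Finset.prod_range_succ, ih, Finset.prod_Icc_succ_top (by omega : 2 ≤ n + 1 + 1)]
    cases n with
    | zero => simp
    | succ m =>
      simp only [Nat.add_sub_cancel]
      rw [Finset.prod_Icc_succ_top (by omega : 1 ≤ m + 1)]
      ring

/-- A product over the pairs `i < j` in `Fin n`, written over natural numbers. -/
lemma prod_pairs (n : ℕ) (F : ℕ → ℕ → ℂ) :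
    ∏ i : Fin n, ∏ j ∈ Ioi i, F i j = ∏ j ∈ range n, ∏ i ∈ range j, F i j := by
  rw [← Fin.prod_univ_eq_prod_range (fun j => ∏ i ∈ range j, F i j),
    Finset.prod_comm' (t' := univ) (s' := fun j => Iio j) (by simp)]
  refine Finset.prod_congr rfl fun j _ => ?_
  rw [← Nat.Iio_eq_range, ← Fin.map_valEmbedding_Iio, Finset.prod_map]
  rfl

/-- eq. (A7): the determinant of `A₁` (entries `u_{i+1}^{n−j} u_i^{j−1}`,
1-based) equals `(∏_{k=2}^{n} q^{k(k−1)/2}) · (∏_{k=1}^{n−2} ∏_{i=2}^{k+1} u_i)`;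
in particular it is nonzero when `u_2, …, u_{n−1}` are all nonzero. -/
theorem det_A1 (n : ℕ) (hn : 1 ≤ n) (p q : ℂ) (hq : q ≠ 0) (u : ℕ → ℂ)
    (hu0 : u 0 = 0) (hu1 : u 1 = 1)
    (hu : ∀ m : ℕ, 2 ≤ m → u m = p * u (m - 1) - q * u (m - 2)) :
    Matrix.det (Matrix.of fun i j : Fin n =>
        u ((i : ℕ) + 2) ^ (n - 1 - (j : ℕ)) * u ((i : ℕ) + 1) ^ (j : ℕ)) =
      (∏ k ∈ Icc 2 n, q ^ (k * (k - 1) / 2)) *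
        (∏ k ∈ Icc 1 (n - 2), ∏ i ∈ Icc 2 (k + 1), u i) ∧
    ((∀ i : ℕ, 2 ≤ i → i ≤ n - 1 → u i ≠ 0) →
      Matrix.det (Matrix.of fun i j : Fin n =>
          u ((i : ℕ) + 2) ^ (n - 1 - (j : ℕ)) * u ((i : ℕ) + 1) ^ (j : ℕ)) ≠ 0) := by
  have hdet : Matrix.det (Matrix.of fun i j : Fin n =>
        u ((i : ℕ) + 2) ^ (n - 1 - (j : ℕ)) * u ((i : ℕ) + 1) ^ (j : ℕ)) =
      (∏ k ∈ Icc 2 n, q ^ (k * (k - 1) / 2)) *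
        (∏ k ∈ Icc 1 (n - 2), ∏ i ∈ Icc 2 (k + 1), u i) := by
    have hM : (Matrix.of fun i j : Fin n =>
        u ((i : ℕ) + 2) ^ (n - 1 - (j : ℕ)) * u ((i : ℕ) + 1) ^ (j : ℕ)) =
        Matrix.projVandermonde (fun i : Fin n => u (i + 1)) (fun i : Fin n => u (i + 2)) := by
      ext i j
      rw [Matrix.projVandermonde_apply, Matrix.of_apply, Fin.val_rev, mul_comm,
        show n - 1 - (j : ℕ) = n - (j + 1) by omega]
    rw [hM, Matrix.det_projVandermonde,
      prod_pairs n fun i j => u (j + 1) * u (i + 2) - u (i + 1) * u (j + 2)]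
    obtain ⟨m, rfl⟩ : ∃ m, n = m + 1 := ⟨n - 1, by omega⟩
    rw [show m + 1 - 2 = m - 1 by omega, ← prod_regroup]
    refine Finset.prod_congr rfl fun j _ => ?_
    rw [← prod_column q u hu1]
    refine Finset.prod_congr rfl fun i hi => ?_
    have hij := Finset.mem_range.1 hi
    have h := docagne p q u hu0 hu1 (fun m => by simpa using hu (m + 2) (by omega))
      (i + 1) (j - i)
    rwa [show i + 1 + (j - i) = j + 1 by omega] at h
  refine ⟨hdet, fun hne => ?_⟩
  rw [hdet]
  refine mul_ne_zero (Finset.prod_ne_zero_iff.2 fun k _ => pow_ne_zero _ hq)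
    (Finset.prod_ne_zero_iff.2 fun k hk => Finset.prod_ne_zero_iff.2 fun i hi => ?_)
  rw [Finset.mem_Icc] at hk hi
  exact hne i hi.1 (by omega)
end

section
/- Let n ≥ 1, p, q ∈ ℂ, and let u : ℕ → ℂ be the sequence with u_0 = 0, u_1 = 1 and u_m = p·u_{m−1} − q·u_{m−2} for m ≥ 2. Let B be the n × n matrix whose (i,1) entry is u_i^n and whose (i,j) entry for 2 ≤ j ≤ n is u_{i+1}^{n+1−j}·u_i^{j−1}, and let A_1 be the n × n matrix with (i,j) entry u_{i+1}^{n−j}·u_i^{j−1}. Then det B = (−1)^{n−1} · (u_2·u_3⋯u_n) · det A_1. -/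
/-!
Put `x i = u (i + 1)` and let `C` be the matrix obtained from `A₁` by multiplying row `i` by `x i`,
so that `det C = (∏ x i) * det A₁`, and `∏ x i = u 2 ⋯ u n` because `u 1 = 1`. The columns of `C`
are those of `B` in cyclically shifted order: column `j` of `C` is column `j + 1` of `B`, and the
last column of `C` is the first column of `B`. This `n`-cycle has sign `(-1) ^ (n - 1)`.
-/

open Finset

/-- Appendix B: with `B` having first column `u_i^n` and remaining
entries `u_{i+1}^{n+1−j} u_i^{j−1}` (1-based), one has
`det B = (−1)^{n−1} · (u_2 ⋯ u_n) · det A₁`. -/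
theorem det_B_eq (n : ℕ) (hn : 1 ≤ n) (p q : ℂ) (u : ℕ → ℂ)
    (hu0 : u 0 = 0) (hu1 : u 1 = 1)
    (hu : ∀ m : ℕ, 2 ≤ m → u m = p * u (m - 1) - q * u (m - 2)) :
    Matrix.det (Matrix.of fun i j : Fin n =>
        if (j : ℕ) = 0 then u ((i : ℕ) + 1) ^ n
        else u ((i : ℕ) + 2) ^ (n - (j : ℕ)) * u ((i : ℕ) + 1) ^ (j : ℕ)) =
      (-1 : ℂ) ^ (n - 1) * (∏ k ∈ Icc 2 n, u k) *
        Matrix.det (Matrix.of fun i j : Fin n =>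
          u ((i : ℕ) + 2) ^ (n - 1 - (j : ℕ)) * u ((i : ℕ) + 1) ^ (j : ℕ)) := by
  obtain ⟨m, rfl⟩ : ∃ m, n = m + 1 := ⟨n - 1, by omega⟩
  have hprod : ∏ k ∈ Icc 2 (m + 1), u k = ∏ i : Fin (m + 1), u ((i : ℕ) + 1) := by
    rw [Fin.prod_univ_eq_prod_range (fun i => u (i + 1)) (m + 1), Finset.prod_range_succ']
    simp only [zero_add, hu1, mul_one]
    rw [← Finset.Ico_add_one_right_eq_Icc, Finset.prod_Ico_eq_prod_range]
    refine Finset.prod_congr (by congr 1) fun i _ => ?_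
    congr 1
    omega
  set B : Matrix (Fin (m + 1)) (Fin (m + 1)) ℂ := Matrix.of fun i j =>
    if (j : ℕ) = 0 then u ((i : ℕ) + 1) ^ (m + 1)
    else u ((i : ℕ) + 2) ^ (m + 1 - (j : ℕ)) * u ((i : ℕ) + 1) ^ (j : ℕ) with hB
  set A : Matrix (Fin (m + 1)) (Fin (m + 1)) ℂ := Matrix.of fun i j =>
    u ((i : ℕ) + 2) ^ (m + 1 - 1 - (j : ℕ)) * u ((i : ℕ) + 1) ^ (j : ℕ) with hA
  have hC : B.submatrix id (finRotate (m + 1)) =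
      Matrix.of fun i j : Fin (m + 1) => u ((i : ℕ) + 1) * A i j := by
    ext i j
    rcases Fin.eq_castSucc_or_eq_last j with ⟨k, rfl⟩ | rfl
    · have hk : m + 1 - ((k : ℕ) + 1) = m - k := by omega
      simp [hB, hA, hk]
      ring
    · simp [hB, hA]
      ring
  have hdet := congrArg Matrix.det hC
  rw [Matrix.det_permute', Matrix.det_mul_column, sign_finRotate, ← hprod] at hdet
  push_cast at hdet
  -- The sign is its own inverse, so it can be moved to the other side.
  have hsign : (-1 : ℂ) ^ m * (-1) ^ m = 1 := by rw [← mul_pow]; simp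
  rw [Nat.add_sub_cancel, mul_assoc, ← hdet, ← mul_assoc, hsign, one_mul]
end

section
/- For n ≥ 2, let φ_n ∈ ℚ[x] be the polynomial φ_n(x) = Σ_{i=0}^{n} (−1)^i · (−1)^{i(i−1)/2} · (n | i)_F · x^i, where (n | i)_F = (F_n·F_{n−1}⋯F_{n−i+1})/(F_i·F_{i−1}⋯F_1) is the Fibonomial coefficient and F_k is the k-th Fibonacci number. Then the Galois group of φ_n over ℚ (i.e., the Galois group of its splitting field over ℚ) is a cyclic group of order 2. -/
open Finset Polynomial

/-!
Let `φ`, `ψ` be the golden ratio and its conjugate. The `q`-binomial theorem with `q = ψ / φ` gives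
the factorization over `ℝ`
`φ_n(x) = ∏_{j < n} (1 - φ ^ j * ψ ^ (n - 1 - j) * x)` (`fibonomialProd_coeff`),
which is proved by induction on `n`, comparing coefficients; the induction step comes down to
`F_{m+k} = ψ ^ k * F_m + φ ^ m * F_k`. Hence all roots of `φ_n` lie in `ℚ(φ)`. Conversely
`φ ^ (n - 1) = F_{n-1} * φ + F_{n-2}` is the inverse of a root, and `F_{n-1} ≠ 0` because `n ≥ 2`,
so the roots generate `ℚ(φ)`. The splitting field is therefore the quadratic field `ℚ(φ)`.
-/

open Real in
lemma fib_add_eq_conj_pow (m k : ℕ) :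
    (Nat.fib (m + k) : ℝ) = goldenConj ^ k * Nat.fib m + goldenRatio ^ m * Nat.fib k := by
  have h5 : √5 ≠ 0 := by positivity
  simp only [coe_fib_eq]
  field_simp
  ring

/-- The coefficient of `x ^ i` in `φ_n`, as an element of a field `K` (meant to be `ℚ` or `ℝ`, where
the denominator is nonzero). It vanishes for `i > n`, since the numerator then contains `F_0`. -/
noncomputable def fibonomialCoeff (K : Type*) [Field K] (n i : ℕ) : K :=
  (-1 : K) ^ i * (-1 : K) ^ (i * (i - 1) / 2) *
    ((∏ j ∈ range i, (Nat.fib (n - j) : K)) / (∏ j ∈ range i, (Nat.fib (j + 1) : K)))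

lemma fibonomialCoeff_zero (K : Type*) [Field K] (n : ℕ) : fibonomialCoeff K n 0 = 1 := by
  simp [fibonomialCoeff]

lemma fibonomialCoeff_eq_zero (K : Type*) [Field K] {n i : ℕ} (h : n < i) :
    fibonomialCoeff K n i = 0 := by
  have : ∏ j ∈ range i, (Nat.fib (n - j) : K) = 0 :=
    prod_eq_zero (mem_range.2 h) (by simp)
  simp [fibonomialCoeff, this]

/-- The recursion satisfied by the coefficients of
`∏_{j < n} (1 - φ ^ j * ψ ^ (n - 1 - j) * x)`. -/
lemma fibonomialCoeff_succ_succ (n i : ℕ) :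
    fibonomialCoeff ℝ (n + 1) (i + 1) =
      Real.goldenConj ^ (i + 1) * fibonomialCoeff ℝ n (i + 1) -
        Real.goldenRatio ^ n * (Real.goldenConj ^ i * fibonomialCoeff ℝ n i) := by
  rcases lt_or_ge n i with h | h
  · simp [fibonomialCoeff_eq_zero ℝ h, fibonomialCoeff_eq_zero ℝ (Nat.lt_succ_of_lt h),
      fibonomialCoeff_eq_zero ℝ (Nat.succ_lt_succ h)]
  obtain ⟨m, rfl⟩ := Nat.exists_eq_add_of_le' h
  have hprod : ∏ j ∈ range i, (Nat.fib (j + 1) : ℝ) ≠ 0 :=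
    prod_ne_zero_iff.2 fun j _ => by simp
  have hF : (Nat.fib (i + 1) : ℝ) ≠ 0 := by simp
  have key := fib_add_eq_conj_pow m (i + 1)
  have hsign : Real.goldenRatio ^ i * Real.goldenConj ^ i = (-1) ^ i := by
    rw [← mul_pow, Real.goldenRatio_mul_goldenConj]
  unfold fibonomialCoeff
  rw [Nat.triangle_succ, prod_range_succ (fun j => (Nat.fib (j + 1) : ℝ)),
    prod_range_succ' (fun j => (Nat.fib (m + i + 1 - j) : ℝ)),
    prod_range_succ (fun j => (Nat.fib (m + i - j) : ℝ))]
  simp only [Nat.add_sub_add_right, Nat.sub_zero, Nat.add_sub_cancel]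
  rw [show m + i + 1 = m + (i + 1) by ring, key]
  have hpow : Real.goldenRatio ^ (m + i) * Real.goldenConj ^ i =
      Real.goldenRatio ^ m * (-1) ^ i := by
    rw [pow_add, mul_assoc, hsign]
  rw [← mul_assoc (Real.goldenRatio ^ (m + i)), hpow]
  field_simp
  ring

/-- The product `∏_{j < n} (1 - φ ^ j * ψ ^ (n - 1 - j) * x)`. -/
noncomputable def fibonomialProd (n : ℕ) : ℝ[X] :=
  ∏ j ∈ range n, (1 - C (Real.goldenRatio ^ j * Real.goldenConj ^ (n - 1 - j)) * X)

lemma fibonomialProd_succ (n : ℕ) :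
    fibonomialProd (n + 1) = (fibonomialProd n).comp (C Real.goldenConj * X) *
      (1 - C (Real.goldenRatio ^ n) * X) := by
  unfold fibonomialProd
  rw [prod_range_succ, Polynomial.prod_comp]
  congr 1
  · refine prod_congr rfl fun j hj => ?_
    have : n + 1 - 1 - j = (n - 1 - j) + 1 := by have := mem_range.1 hj; omega
    rw [this]
    simp only [sub_comp, one_comp, mul_comp, C_comp, X_comp, pow_succ, C_mul]
    ring
  · simp

/-- The `q`-binomial theorem for `q = ψ / φ`. -/
lemma fibonomialProd_coeff (n i : ℕ) : (fibonomialProd n).coeff i = fibonomialCoeff ℝ n i := by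
  induction n generalizing i with
  | zero =>
    rcases i with _ | i
    · simp [fibonomialProd, fibonomialCoeff_zero]
    · simp [fibonomialProd, fibonomialCoeff_eq_zero, coeff_one]
  | succ n ih =>
    rw [fibonomialProd_succ, mul_sub, mul_one, mul_left_comm, coeff_sub, coeff_C_mul]
    rcases i with _ | i
    · simp [comp_C_mul_X_coeff, ih, fibonomialCoeff_zero]
    · rw [coeff_mul_X, comp_C_mul_X_coeff, comp_C_mul_X_coeff, ih, ih,
        fibonomialCoeff_succ_succ]
      ring

lemma map_fibonomialPoly (n : ℕ) :
    (∑ i ∈ range (n + 1), C (fibonomialCoeff ℚ n i) * X ^ i).map (algebraMap ℚ ℝ) =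
      fibonomialProd n := by
  ext k
  simp only [Polynomial.map_sum, Polynomial.map_mul, map_C, Polynomial.map_pow, map_X,
    finsetSum_coeff, coeff_C_mul, coeff_X_pow, fibonomialProd_coeff]
  have hc : algebraMap ℚ ℝ (fibonomialCoeff ℚ n k) = fibonomialCoeff ℝ n k := by
    simp [fibonomialCoeff]
  simp only [mul_ite, mul_one, mul_zero, sum_ite_eq, mem_range, hc]
  split_ifs with h
  · rfl
  · exact (fibonomialCoeff_eq_zero ℝ (by omega)).symm

lemma fibonomialProd_splits (n : ℕ) : (fibonomialProd n).Splits := by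
  refine Splits.prod fun j _ => Splits.of_natDegree_le_one ?_
  compute_degree

lemma eval_fibonomialProd_eq_zero {n : ℕ} {x : ℝ} : (fibonomialProd n).eval x = 0 ↔
    ∃ j < n, x = (Real.goldenRatio ^ j * Real.goldenConj ^ (n - 1 - j))⁻¹ := by
  simp only [fibonomialProd, eval_prod, prod_eq_zero_iff, mem_range]
  refine exists_congr fun j => and_congr_right fun _ => ?_
  have h : Real.goldenRatio ^ j * Real.goldenConj ^ (n - 1 - j) ≠ 0 :=
    mul_ne_zero (pow_ne_zero _ Real.goldenRatio_ne_zero) (pow_ne_zero _ Real.goldenConj_ne_zero)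
  simp only [eval_sub, eval_one, eval_mul, eval_C, eval_X, sub_eq_zero]
  rw [eq_comm, mul_comm, mul_eq_one_iff_eq_inv₀ h]

open IntermediateField in
lemma finrank_adjoin_goldenRatio : Module.finrank ℚ ℚ⟮Real.goldenRatio⟯ = 2 := by
  have hmon : (X ^ 2 - X - 1 : ℚ[X]).Monic := by monicity!
  have hdeg : (X ^ 2 - X - 1 : ℚ[X]).natDegree = 2 := by compute_degree!
  have hroot : aeval Real.goldenRatio (X ^ 2 - X - 1 : ℚ[X]) = 0 := by
    simp [Real.goldenRatio_sq]
  have hint : IsIntegral ℚ Real.goldenRatio := ⟨_, hmon, hroot⟩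
  rw [adjoin.finrank hint]
  refine le_antisymm ?_ ((minpoly.two_le_natDegree_iff hint).2 ?_)
  · exact hdeg ▸ natDegree_le_of_dvd (minpoly.dvd _ _ hroot) hmon.ne_zero
  · rintro ⟨q, hq⟩
    exact Real.goldenRatio_irrational ⟨q, hq⟩

open IntermediateField in
lemma adjoin_rootSet_fibonomialPoly {n : ℕ} (hn : 2 ≤ n) {P : ℚ[X]}
    (hP : P.map (algebraMap ℚ ℝ) = fibonomialProd n) :
    IntermediateField.adjoin ℚ (P.rootSet ℝ) = ℚ⟮Real.goldenRatio⟯ := by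
  have hP0 : P ≠ 0 := by
    rintro rfl
    have h := fibonomialProd_coeff n 0
    rw [← hP, fibonomialCoeff_zero] at h
    simp at h
  have hmem (x : ℝ) : x ∈ P.rootSet ℝ ↔
      ∃ j < n, x = (Real.goldenRatio ^ j * Real.goldenConj ^ (n - 1 - j))⁻¹ := by
    rw [mem_rootSet_of_ne hP0, ← eval_map_algebraMap, hP, eval_fibonomialProd_eq_zero]
  apply le_antisymm
  · rw [adjoin_le_iff]
    intro x hx
    obtain ⟨j, -, rfl⟩ := (hmem x).1 hx
    have hφ : Real.goldenRatio ∈ ℚ⟮Real.goldenRatio⟯ := mem_adjoin_simple_self ℚ _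
    have hψ : Real.goldenConj ∈ ℚ⟮Real.goldenRatio⟯ := by
      rw [← Real.one_sub_goldenConj]
      exact sub_mem (one_mem _) hφ
    exact inv_mem (mul_mem (pow_mem hφ _) (pow_mem hψ _))
  · rw [adjoin_simple_le_iff]
    obtain ⟨m, rfl⟩ := Nat.exists_eq_add_of_le' hn
    set K := IntermediateField.adjoin ℚ (P.rootSet ℝ)
    -- The root with `j = n - 1` is the inverse of `φ ^ (n - 1)`.
    have hroot : (Real.goldenRatio ^ (m + 1))⁻¹ ∈ K :=
      subset_adjoin _ _ ((hmem _).2 ⟨m + 1, by omega, by simp⟩)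
    have hpow : Real.goldenRatio ^ (m + 1) ∈ K := by simpa using inv_mem hroot
    have hF : (Nat.fib (m + 1) : ℝ) ≠ 0 := by simp
    have heq : Real.goldenRatio =
        (Real.goldenRatio ^ (m + 1) - Nat.fib m) / Nat.fib (m + 1) := by
      rw [eq_div_iff hF, ← Real.goldenRatio_mul_fib_succ_add_fib]
      ring
    rw [heq]
    exact div_mem (sub_mem hpow (_root_.natCast_mem _ _)) (_root_.natCast_mem _ _)

/-- Stated over a general base field `F`, so that the only `F`-algebra structure in sight on
`P.SplittingField` is the one used by `Polynomial.Gal`. -/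
lemma card_gal_eq_finrank {F : Type*} [Field F] [CharZero F] (P : F[X]) (K : Type*) [Field K]
    [Algebra F K] [IsSplittingField F K P] : Nat.card P.Gal = Module.finrank F K := by
  have hnormal : Normal F P.SplittingField := Normal.of_isSplittingField P
  have hgal : IsGalois F P.SplittingField := {}
  rw [(IsSplittingField.algEquiv K P).toLinearEquiv.finrank_eq]
  exact IsGalois.card_aut_eq_finrank F P.SplittingField

/-- Proposition 4.1: the Galois group over `ℚ` of
`φ_n(x) = Σ_{i=0}^{n} (−1)^i (−1)^{i(i−1)/2} (n | i)_F x^i` (with Fibonomial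
coefficients `(n | i)_F`) is cyclic of order `2`, for every `n ≥ 2`. -/
theorem galois_group_fibonomial_poly (n : ℕ) (hn : 2 ≤ n) :
    IsCyclic (Polynomial.Gal
      (∑ i ∈ range (n + 1),
        Polynomial.C ((-1 : ℚ) ^ i * (-1 : ℚ) ^ (i * (i - 1) / 2) *
          ((∏ j ∈ range i, (Nat.fib (n - j) : ℚ)) /
            (∏ j ∈ range i, (Nat.fib (j + 1) : ℚ)))) * Polynomial.X ^ i)) ∧
    Nat.card (Polynomial.Gal
      (∑ i ∈ range (n + 1),
        Polynomial.C ((-1 : ℚ) ^ i * (-1 : ℚ) ^ (i * (i - 1) / 2) *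
          ((∏ j ∈ range i, (Nat.fib (n - j) : ℚ)) /
            (∏ j ∈ range i, (Nat.fib (j + 1) : ℚ)))) * Polynomial.X ^ i)) = 2 := by
  have hP := map_fibonomialPoly n
  unfold fibonomialCoeff at hP
  generalize (∑ i ∈ range (n + 1),
        Polynomial.C ((-1 : ℚ) ^ i * (-1 : ℚ) ^ (i * (i - 1) / 2) *
          ((∏ j ∈ range i, (Nat.fib (n - j) : ℚ)) /
            (∏ j ∈ range i, (Nat.fib (j + 1) : ℚ)))) * Polynomial.X ^ i) = P at hP ⊢
  have hcard : Nat.card P.Gal = 2 := by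
    have hsplit : IsSplittingField ℚ (IntermediateField.adjoin ℚ (P.rootSet ℝ)) P :=
      IntermediateField.adjoin_rootSet_isSplittingField (hP ▸ fibonomialProd_splits n)
    rw [card_gal_eq_finrank P (IntermediateField.adjoin ℚ (P.rootSet ℝ)),
      adjoin_rootSet_fibonomialPoly hn hP, finrank_adjoin_goldenRatio]
  have : Fact (Nat.Prime 2) := ⟨Nat.prime_two⟩
  exact ⟨isCyclic_of_prime_card hcard, hcard⟩
end

section
/- Let a = (1+√5)/2 and b = (1−√5)/2 be the roots of x² − x − 1 = 0, and for m ≥ 0 define the real polynomial ψ_m(x) = ∏_{j=0}^{m} (x − a^j·b^{m−j}). Then for every n ≥ 2, ψ_n(x) = (−1)^{n−1} · (x − a^n)·(x − b^n) · ψ_{n−2}(−x) as polynomials in ℝ[x]. (Equivalently, since a·b = −1, this is ψ_n(x) = (ab)^{n−1}(x − a^n)(x − b^n)·ψ_{n−2}(x/(ab)).) -/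
/-!
The end factors `j = n` and `j = 0` of `ψ_n` are `x − a^n` and `x − b^n`. For `0 < j < n` the root
is `ab = −1` times the root `a^(j-1) b^(n-1-j)` of `ψ_{n-2}`, so `x − a^j b^(n-j)` is minus the
factor of `ψ_{n-2}(−x)` with index `j - 1`; there are `n − 1` such factors, whence the sign.
-/

open Finset Polynomial

/-- eq. (4.2): with `a = (1+√5)/2`, `b = (1−√5)/2` and
`ψ_m(x) = ∏_{j=0}^{m} (x − a^j b^{m−j})`, one has, for `n ≥ 2`,
`ψ_n(x) = (−1)^{n−1} (x − a^n)(x − b^n) ψ_{n−2}(−x)` in `ℝ[x]`. -/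
theorem psi_factorization (a b : ℝ)
    (ha : a = (1 + Real.sqrt 5) / 2) (hb : b = (1 - Real.sqrt 5) / 2)
    (ψ : ℕ → Polynomial ℝ)
    (hψ : ∀ m : ℕ, ψ m =
      ∏ j ∈ range (m + 1), (Polynomial.X - Polynomial.C (a ^ j * b ^ (m - j))))
    (n : ℕ) (hn : 2 ≤ n) :
    ψ n = Polynomial.C ((-1 : ℝ) ^ (n - 1)) *
      ((Polynomial.X - Polynomial.C (a ^ n)) * (Polynomial.X - Polynomial.C (b ^ n))) *
      (ψ (n - 2)).comp (-Polynomial.X) := by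
  have hab : a * b = -1 := by
    have h5 : Real.sqrt 5 ^ 2 = 5 := Real.sq_sqrt (by norm_num)
    subst ha hb
    linarith [h5, show (1 + Real.sqrt 5) / 2 * ((1 - Real.sqrt 5) / 2)
      = (1 - Real.sqrt 5 ^ 2) / 4 by ring]
  obtain ⟨m, rfl⟩ := Nat.exists_eq_add_of_le' hn
  have hmid : ∏ j ∈ range (m + 1), (X - C (a ^ (j + 1) * b ^ (m + 2 - (j + 1)))) =
      C ((-1 : ℝ) ^ (m + 1)) * (ψ m).comp (-X) := by
    have hfac : ∀ j ∈ range (m + 1), X - C (a ^ (j + 1) * b ^ (m + 2 - (j + 1))) =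
        C (-1 : ℝ) * (X - C (a ^ j * b ^ (m - j))).comp (-X) := by
      intro j hj
      have hroot : a ^ (j + 1) * b ^ (m + 2 - (j + 1)) = -(a ^ j * b ^ (m - j)) := by
        have hexp : m + 2 - (j + 1) = m - j + 1 := by
          have := mem_range.mp hj
          omega
        rw [hexp, pow_succ, pow_succ]
        linear_combination a ^ j * b ^ (m - j) * hab
      rw [hroot]
      simp only [sub_comp, X_comp, C_comp, C_neg, C_1]
      ring
    rw [prod_congr rfl hfac, prod_mul_distrib, prod_const, card_range, hψ m, Polynomial.prod_comp, C_pow]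
  rw [hψ (m + 2), prod_range_succ, prod_range_succ', hmid]
  simp only [Nat.add_sub_cancel, Nat.sub_self, Nat.sub_zero, pow_zero, mul_one, one_mul,
    show m + 2 - 1 = m + 1 from rfl]
  ring
end

section
/- Let a = (1+√5)/2 and b = (1−√5)/2 be the roots of x² − x − 1 = 0, for m ≥ 0 define ψ_m(x) = ∏_{j=0}^{m} (x − a^j·b^{m−j}) ∈ ℝ[x], and let L_n denote the n-th Lucas number. Then for every n ≥ 2, ψ_n(x) = (−1)^{n−1} · (x² − L_n·x + (−1)^n) · ψ_{n−2}(−x) as polynomials in ℝ[x]. -/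
/-!
The factors `j = 0` and `j = n` of `ψ_n` multiply to `(x − b^n)(x − a^n) = x² − L_n x + (−1)^n`.
For `0 < j < n`, one factor `a b = −1` comes out of the root, so that
`x − a^j b^{n−j} = −((−x) − a^{j−1} b^{(n−2)−(j−1)})`; these `n − 1` factors give
`(−1)^{n−1} ψ_{n−2}(−x)`.
-/

open Finset Polynomial

/-- eq. (4.4): with `a = (1+√5)/2`, `b = (1−√5)/2`,
`ψ_m(x) = ∏_{j=0}^{m} (x − a^j b^{m−j})` and `L` the Lucas sequence, one has, for
`n ≥ 2`, `ψ_n(x) = (−1)^{n−1} (x² − L_n x + (−1)^n) ψ_{n−2}(−x)` in `ℝ[x]`. -/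
theorem psi_factorization_lucas (a b : ℝ)
    (ha : a = (1 + Real.sqrt 5) / 2) (hb : b = (1 - Real.sqrt 5) / 2)
    (ψ : ℕ → Polynomial ℝ)
    (hψ : ∀ m : ℕ, ψ m =
      ∏ j ∈ range (m + 1), (Polynomial.X - Polynomial.C (a ^ j * b ^ (m - j))))
    (L : ℕ → ℝ) (hL0 : L 0 = 2) (hL1 : L 1 = 1)
    (hL : ∀ m : ℕ, L (m + 2) = L (m + 1) + L m)
    (n : ℕ) (hn : 2 ≤ n) :
    ψ n = Polynomial.C ((-1 : ℝ) ^ (n - 1)) *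
      (Polynomial.X ^ 2 - Polynomial.C (L n) * Polynomial.X +
        Polynomial.C ((-1 : ℝ) ^ n)) *
      (ψ (n - 2)).comp (-Polynomial.X) := by
  have h5 : Real.sqrt 5 ^ 2 = 5 := Real.sq_sqrt (by norm_num)
  have hab : a * b = -1 := by
    rw [ha, hb]; linear_combination (-1 / 4 : ℝ) * h5
  have ha2 : a ^ 2 = a + 1 := by
    rw [ha]; linear_combination (1 / 4 : ℝ) * h5
  have hb2 : b ^ 2 = b + 1 := by
    rw [hb]; linear_combination (1 / 4 : ℝ) * h5
  have hBinet : ∀ m : ℕ, L m = a ^ m + b ^ m ∧ L (m + 1) = a ^ (m + 1) + b ^ (m + 1) := by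
    intro m
    induction m with
    | zero =>
      refine ⟨by rw [hL0]; norm_num, ?_⟩
      rw [hL1, ha, hb]; ring
    | succ k ih =>
      refine ⟨ih.2, ?_⟩
      rw [hL k, ih.1, ih.2]
      linear_combination (-a ^ k) * ha2 - b ^ k * hb2
  obtain ⟨k, rfl⟩ := Nat.exists_eq_add_of_le' hn
  have hmid : ∏ i ∈ range (k + 1),
      (X - C (a ^ (i + 1) * b ^ (k + 2 - (i + 1)))) =
      C ((-1 : ℝ) ^ (k + 1)) * (ψ k).comp (-X) := by
    rw [hψ k, Polynomial.prod_comp, C_pow]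
    conv_rhs => rw [← Finset.card_range (k + 1), ← Finset.prod_const, Finset.card_range]
    rw [← Finset.prod_mul_distrib]
    refine Finset.prod_congr rfl fun i hi => ?_
    have hik : i ≤ k := Nat.lt_succ_iff.mp (Finset.mem_range.mp hi)
    have hroot : a ^ (i + 1) * b ^ (k + 2 - (i + 1)) = -(a ^ i * b ^ (k - i)) := by
      rw [show k + 2 - (i + 1) = k - i + 1 by omega, pow_succ, pow_succ]
      linear_combination (a ^ i * b ^ (k - i)) * hab
    rw [hroot]
    simp only [sub_comp, X_comp, C_comp, C_neg, C_1]
    ring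
  have hends : (X - C (b ^ (k + 2))) * (X - C (a ^ (k + 2))) =
      X ^ 2 - C (L (k + 2)) * X + C ((-1 : ℝ) ^ (k + 2)) := by
    rw [(hBinet (k + 2)).1, ← hab, mul_pow, C_add, C_mul]
    ring
  rw [hψ (k + 2), Finset.prod_range_succ, Finset.prod_range_succ', hmid, ← hends]
  simp only [pow_zero, one_mul, Nat.sub_zero, Nat.sub_self, mul_one, Nat.add_sub_cancel,
    show k + 2 - 1 = k + 1 by omega]
  ring
end

section
/- Let v ≥ 1, let p, q ∈ ℂ with q ≠ 0, and let u be the (p,q)-recursive sequence with u_0 = 0, u_1 = 1; suppose u_1·u_2⋯u_v ≠ 0. Then for every integer k with 0 ≤ k ≤ v−1, the sequence X(m) = u_{m−1}^k · u_m^{v−1−k} satisfies Σ_{i=0}^{v} (−1)^i · q^{i(i−1)/2} · (v | i)_u · X(m−i) = 0 for all m ∈ ℤ. -/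
open Finset

/-!
The claim holds for every product `X` of `v - 1` solutions of the recurrence, and is proved by
adding one factor at a time. Write `(S_v X)(m) = ∑ (-1)^i q^{i(i-1)/2} (v | i)_u X(m - i)`.
A solution `y` is determined by two values, explicitly (`interpolation`)
`u_n y(m - i) = u_{n-i} y(m) + q^{n-i} u_i y(m - n)`. Taking `n = v + 1` and using
`(v+1 | i) u_{v+1-i} = u_{v+1} (v | i)` and `(v+1 | i) u_i = u_{v+1} (v | i-1)` gives
`S_{v+1}(X y)(m) = y(m) (S_v X)(m) - q^v y(m - v - 1) (S_v X)(m - 1)`,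
so `S_v X = 0` implies `S_{v+1}(X y) = 0` (`lucSum_step`). The base case is
`S_1 1 = 1 - (1 | 1)_u = 0`.
-/

/-- The generalized binomial coefficient `(v | i)_u`, by the product formula; it vanishes for
`i = v + 1` when `u 0 = 0`. -/
noncomputable def lucBinom (u : ℤ → ℂ) (v i : ℕ) : ℂ :=
  (∏ j ∈ range i, u ((v : ℤ) - j)) / (∏ j ∈ range i, u (j + 1))

/-- The operator `S_v` applied to the sequence `X`, evaluated at `m`. -/
noncomputable def lucSum (q : ℂ) (u X : ℤ → ℂ) (v : ℕ) (m : ℤ) : ℂ :=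
  ∑ i ∈ range (v + 1), (-1 : ℂ) ^ i * q ^ (i * (i - 1) / 2) * lucBinom u v i * X (m - i)

/-- The case `d = 1` of `interpolation`. -/
lemma interpolation_one {p q : ℂ} {u y : ℤ → ℂ}
    (hu : ∀ m : ℤ, u m = p * u (m - 1) - q * u (m - 2)) (hu0 : u 0 = 0) (hu1 : u 1 = 1)
    (hy : ∀ m : ℤ, y m = p * y (m - 1) - q * y (m - 2)) (t : ℤ) (i : ℕ) :
    u (i + 1) * y t = y (t + i) + q * u i * y (t - 1) := by
  induction i using Nat.twoStepInduction with
  | zero => simp [hu0, hu1]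
  | one =>
    have h1 := hu 2
    have h2 := hy (t + 1)
    norm_num [hu0, hu1] at h1
    rw [show t + 1 - 1 = t by ring, show t + 1 - 2 = t - 1 by ring] at h2
    norm_num [hu1]
    rw [h1, h2]
    ring
  | more n ih1 ih2 =>
    have h1 := hu ((n : ℤ) + 3)
    have h2 := hu ((n : ℤ) + 2)
    have h3 := hy (t + n + 2)
    push_cast at *
    ring_nf at *
    linear_combination y t * h1 - h3 - q * y (-1 + t) * h2 + p * ih2 - q * ih1

/-- The value of a solution `y` at `t` in terms of its values at `t + i` and `t - d`: as functions
of `d`, both sides satisfy the recurrence. -/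
lemma interpolation {p q : ℂ} {u y : ℤ → ℂ}
    (hu : ∀ m : ℤ, u m = p * u (m - 1) - q * u (m - 2)) (hu0 : u 0 = 0) (hu1 : u 1 = 1)
    (hy : ∀ m : ℤ, y m = p * y (m - 1) - q * y (m - 2)) (t : ℤ) (i d : ℕ) :
    u (i + d) * y t = u d * y (t + i) + q ^ d * u i * y (t - d) := by
  induction d using Nat.twoStepInduction with
  | zero => simp [hu0]
  | one => simpa [hu1] using interpolation_one hu hu0 hu1 hy t i
  | more n ih1 ih2 =>
    have h1 := hu ((i : ℤ) + n + 2)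
    have h2 := hu ((n : ℤ) + 2)
    have h3 := hy (t - n)
    push_cast at *
    ring_nf at *
    linear_combination y t * h1 - y (i + t) * h2 + p * ih2 - q * ih1 - q ^ n * q * u i * h3

lemma lucBinom_succ_mul (u : ℤ → ℂ) (v i : ℕ) :
    lucBinom u (v + 1) i * u ((v + 1 : ℕ) - i) = u (v + 1) * lucBinom u v i := by
  have h : (∏ j ∈ range i, u (((v + 1 : ℕ) : ℤ) - j)) * u ((v + 1 : ℕ) - i)
      = u (v + 1) * ∏ j ∈ range i, u ((v : ℤ) - j) := by
    rw [← prod_range_succ, prod_range_succ', mul_comm]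
    push_cast
    simp only [add_sub_add_right_eq_sub, sub_zero]
  rw [lucBinom, lucBinom, div_mul_eq_mul_div, h, mul_div_assoc]

lemma lucBinom_succ_succ_mul (u : ℤ → ℂ) (v j : ℕ) (hj : u (j + 1) ≠ 0) :
    lucBinom u (v + 1) (j + 1) * u (j + 1) = u (v + 1) * lucBinom u v j := by
  have h : (∏ l ∈ range (j + 1), u (((v + 1 : ℕ) : ℤ) - l))
      = u (v + 1) * ∏ l ∈ range j, u ((v : ℤ) - l) := by
    rw [prod_range_succ', mul_comm]
    push_cast
    simp only [add_sub_add_right_eq_sub, sub_zero]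
  rw [lucBinom, lucBinom, h, prod_range_succ, div_mul_eq_mul_div, mul_div_mul_right _ _ hj,
    mul_div_assoc]

/-- If `S_v` annihilates `X` and `y` solves the recurrence, then `S_{v+1}` annihilates `X y`. -/
lemma lucSum_step {p q : ℂ} {u y X : ℤ → ℂ}
    (hu : ∀ m : ℤ, u m = p * u (m - 1) - q * u (m - 2)) (hu0 : u 0 = 0) (hu1 : u 1 = 1)
    (hy : ∀ m : ℤ, y m = p * y (m - 1) - q * y (m - 2)) (v : ℕ)
    (hnz : ∀ j : ℕ, j ≤ v → u (j + 1) ≠ 0) (hX : ∀ m, lucSum q u X v m = 0) (m : ℤ) :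
    lucSum q u (fun n => X n * y n) (v + 1) m = 0 := by
  have hv := hnz v le_rfl
  have hterm : ∀ i ∈ range (v + 1 + 1),
      u (v + 1) * ((-1 : ℂ) ^ i * q ^ (i * (i - 1) / 2) * lucBinom u (v + 1) i *
        (X (m - i) * y (m - i)))
      = u (v + 1) * y m *
          ((-1 : ℂ) ^ i * q ^ (i * (i - 1) / 2) * lucBinom u v i * X (m - i))
        + y (m - (v + 1)) * ((-1 : ℂ) ^ i * q ^ (i * (i - 1) / 2 + (v + 1 - i)) *
          (lucBinom u (v + 1) i * u i) * X (m - i)) := by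
    intro i hi
    obtain ⟨d, hd⟩ := Nat.exists_eq_add_of_le (Nat.lt_succ_iff.mp (mem_range.mp hi))
    have h1 := interpolation hu hu0 hu1 hy (m - i) i d
    have h2 := lucBinom_succ_mul u v i
    have hd' : (v : ℤ) + 1 = i + d := by exact_mod_cast hd
    rw [hd, Nat.add_sub_cancel_left, hd']
    rw [hd'] at h2
    rw [show ((v + 1 : ℕ) : ℤ) - i = d by push_cast; omega, hd] at h2
    rw [sub_add_cancel, sub_sub] at h1
    rw [pow_add]
    linear_combination ((-1 : ℂ) ^ i * q ^ (i * (i - 1) / 2) * X (m - i)) *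
      (lucBinom u (i + d) i * h1 + y m * h2)
  have hA : ∑ i ∈ range (v + 1 + 1),
      (-1 : ℂ) ^ i * q ^ (i * (i - 1) / 2) * lucBinom u v i * X (m - i) = 0 := by
    have h0 : lucBinom u v (v + 1) = 0 := by
      simp [lucBinom, prod_range_succ, hu0]
    rw [sum_range_succ, h0]
    simpa [lucSum] using hX m
  have hB : ∑ i ∈ range (v + 1 + 1), (-1 : ℂ) ^ i * q ^ (i * (i - 1) / 2 + (v + 1 - i)) *
      (lucBinom u (v + 1) i * u i) * X (m - i) = 0 := by
    have h : ∀ j ∈ range (v + 1),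
        (-1 : ℂ) ^ (j + 1) * q ^ ((j + 1) * (j + 1 - 1) / 2 + (v + 1 - (j + 1))) *
          (lucBinom u (v + 1) (j + 1) * u (j + 1 : ℕ)) * X (m - (j + 1 : ℕ))
        = -(q ^ v * u (v + 1)) *
          ((-1 : ℂ) ^ j * q ^ (j * (j - 1) / 2) * lucBinom u v j * X (m - 1 - j)) := by
      intro j hj
      have hj' : j ≤ v := Nat.lt_succ_iff.mp (mem_range.mp hj)
      have he : (j + 1) * (j + 1 - 1) / 2 + (v + 1 - (j + 1)) = j * (j - 1) / 2 + v := by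
        rw [Nat.triangle_succ]
        omega
      rw [he, Nat.cast_succ, lucBinom_succ_succ_mul u v j (hnz j hj'),
        show m - ((j : ℤ) + 1) = m - 1 - j by ring]
      ring
    rw [sum_range_succ', sum_congr rfl h, ← mul_sum]
    have h1 := hX (m - 1)
    rw [lucSum] at h1
    rw [h1]
    simp [hu0]
  refine (mul_eq_zero.mp ?_).resolve_left hv
  rw [lucSum, mul_sum, sum_congr rfl hterm, sum_add_distrib, ← mul_sum, ← mul_sum, hA, hB]
  simp

lemma lucSum_pow_mul_pow {p q : ℂ} {u x y : ℤ → ℂ}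
    (hu : ∀ m : ℤ, u m = p * u (m - 1) - q * u (m - 2)) (hu0 : u 0 = 0) (hu1 : u 1 = 1)
    (hx : ∀ m : ℤ, x m = p * x (m - 1) - q * x (m - 2))
    (hy : ∀ m : ℤ, y m = p * y (m - 1) - q * y (m - 2)) (a b : ℕ)
    (hnz : ∀ j : ℕ, j ≤ a + b → u (j + 1) ≠ 0) (m : ℤ) :
    lucSum q u (fun n => x n ^ a * y n ^ b) (a + b + 1) m = 0 := by
  induction b generalizing m with
  | zero =>
    induction a generalizing m with
    | zero => simp [lucSum, lucBinom, sum_range_succ, hu1]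
    | succ a ih =>
      have h := lucSum_step hu hu0 hu1 hx (a + 1) (fun j hj => hnz j (by omega))
        (ih fun j hj => hnz j (by omega)) m
      simpa [pow_succ] using h
  | succ b ih =>
    have h := lucSum_step hu hu0 hu1 hy (a + b + 1) (fun j hj => hnz j (by omega))
      (ih fun j hj => hnz j (by omega)) m
    simpa only [pow_succ, mul_assoc, add_assoc] using h

/-- eq. (D2): if `u_1 u_2 ⋯ u_v ≠ 0`, then for each `0 ≤ k ≤ v−1`
the sequence `X(m) = u_{m−1}^k u_m^{v−1−k}` satisfies
`Σ_{i=0}^{v} (−1)^i q^{i(i−1)/2} (v | i)_u X(m−i) = 0`. -/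
theorem monomial_in_u_satisfies_recurrence (v : ℕ) (hv : 1 ≤ v) (p q : ℂ)
    (hq : q ≠ 0) (u : ℤ → ℂ)
    (hu : ∀ m : ℤ, u m = p * u (m - 1) - q * u (m - 2))
    (hu0 : u 0 = 0) (hu1 : u 1 = 1)
    (hnz : (∏ k ∈ Icc 1 v, u k) ≠ 0)
    (k : ℕ) (hk : k ≤ v - 1) :
    ∀ m : ℤ, ∑ i ∈ range (v + 1),
      (-1 : ℂ) ^ i * q ^ (i * (i - 1) / 2) *
        ((∏ j ∈ range i, u ((v : ℤ) - j)) / (∏ j ∈ range i, u (j + 1))) *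
        (u (m - i - 1) ^ k * u (m - i) ^ (v - 1 - k)) = 0 := by
  intro m
  have hnz' : ∀ j : ℕ, j ≤ k + (v - 1 - k) → u (j + 1) ≠ 0 := by
    intro j hj
    have h := prod_ne_zero_iff.mp hnz (j + 1) (by simp; omega)
    exact_mod_cast h
  have hx : ∀ m : ℤ, u (m - 1) = p * u (m - 1 - 1) - q * u (m - 2 - 1) := by
    intro m
    rw [hu (m - 1), show m - 1 - 2 = m - 2 - 1 by ring]
  have h := lucSum_pow_mul_pow (x := fun n => u (n - 1)) hu hu0 hu1 hx hu k (v - 1 - k) hnz' m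
  rw [show k + (v - 1 - k) + 1 = v by omega] at h
  exact h
end
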